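/- Let B = 2π/√6 and, for integers n ≥ 0 and ℓ ≥ 0, let Q₁(n, ℓ) = 2n(3n + 1) + 3nℓ and Q₂(n, ℓ) = Q₁(n, ℓ) + 8n + 4 + 2ℓ. There exist constants C > 0 and N₀ such that for all integers N ≥ N₀ and all integers ℓ with 0 ≤ ℓ ≤ √N·(log N)², |V_d(ℓ, N + ℓ(ℓ+1)/2)/p(N) − Σ_{n≥0} (e^{−B·Q₁(n,ℓ)/(2√N)} − e^{−B·Q₂(n,ℓ)/(2√N)})| ≤ C·N^{−1/5}. -/

import Mathlib

open scoped BigOperators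

/-- `IsSCC n l k` says that the list `l = (a_1, ..., a_s)` of nonnegative integers
is a strongly concave composition of `n` with central part at (1-indexed) position `k`:
`a_1 > a_2 > ... > a_{k-1} > a_k < a_{k+1} < ... < a_s` and `a_1 + ... + a_s = n`. -/
def IsSCC (n : ℕ) (l : List ℕ) (k : ℕ) : Prop :=
  1 ≤ k ∧ k ≤ l.length ∧ l.sum = n ∧
  (∀ i j : Fin l.length, (i : ℕ) < j → (j : ℕ) < k → l.get j < l.get i) ∧
  (∀ i j : Fin l.length, k - 1 ≤ (i : ℕ) → (i : ℕ) < j → l.get i < l.get j)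

/-- The rank `s - 2k + 1` of a strongly concave composition with `s` parts and
central part at position `k`. -/
def sccRank (l : List ℕ) (k : ℕ) : ℤ := (l.length : ℤ) - 2 * k + 1

/-- `Vd m n` is the number of strongly concave compositions of `n` with rank `m`. -/
noncomputable def Vd (m : ℤ) (n : ℕ) : ℕ :=
  Set.ncard {p : List ℕ × ℕ | IsSCC n p.1 p.2 ∧ sccRank p.1 p.2 = m}

/-- `VdTotal n` is the total number of strongly concave compositions of `n`. -/
noncomputable def VdTotal (n : ℕ) : ℕ :=
  Set.ncard {p : List ℕ × ℕ | IsSCC n p.1 p.2}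

/-- The partition function, extended by `0` to negative integers. -/
def partitionCount (k : ℤ) : ℕ :=
  if 0 ≤ k then Fintype.card (Nat.Partition k.toNat) else 0

open Real

/-- `Q₁(n, ℓ) = 2n(3n + 1) + 3nℓ`. -/
def Q1 (n ℓ : ℕ) : ℕ := 2 * n * (3 * n + 1) + 3 * n * ℓ

/-- `Q₂(n, ℓ) = Q₁(n, ℓ) + 8n + 4 + 2ℓ`. -/
def Q2 (n ℓ : ℕ) : ℕ := Q1 n ℓ + 8 * n + 4 + 2 * ℓ

/-!
Durfee-type identities turn the generating function of the strongly concave compositions of rank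
`ℓ` into the exact formula `V_d(ℓ, N + ℓ(ℓ+1)/2) = ∑ₙ (p(N - Q₁(n, ℓ)) - p(N - Q₂(n, ℓ)))`, so
everything rests on how `p(N - j) / p(N)` compares with `e^{-jt}`, where `t = B / (2√N)`.

The weights `p(n) e^{-nt} / ∑ₘ p(m) e^{-mt}` are the masses of a compound Poisson law on the
integers, since the logarithm of `∏ₘ (1 - xᵐ)⁻¹` is a power series with nonnegative coefficients.
Its characteristic function is bounded by `O(t⁶ / θ⁴)` and is close to a Gaussian near `θ = 0`, with
mean `π² / (6 t²) + O(t^{-5/4})`. By Fourier inversion consecutive masses differ by `O(t³)`, and the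
mass at `N` is at least of order `t^{3/2}`. Hence `p(N - j) / p(N) = e^{-jt} (1 + aⱼ)` where
`a₀ = 0` and consecutive `aⱼ` differ by `O(t^{3/2})`. Because `Q₁(n, ℓ) ≤ Q₂(n, ℓ) ≤ Q₁(n + 1, ℓ)`,
the errors `e^{-jt} aⱼ` contribute at most their total variation, which is `O(t^{1/2})` whatever `ℓ`
is.
-/

section FormalSeries

open PowerSeries PowerSeries.WithPiTopology
open scoped PowerSeries.WithPiTopology

section Divisibility

variable {R : Type*} [Ring R]

lemma eq_zero_of_forall_X_pow_dvd {f : R⟦X⟧} (h : ∀ k : ℕ, X ^ k ∣ f) : f = 0 :=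
  PowerSeries.ext fun n => X_pow_dvd_iff.1 (h (n + 1)) n n.lt_succ_self

variable [TopologicalSpace R]

lemma summable_of_forall_X_pow_dvd {f : ℕ → R⟦X⟧} (h : ∀ k : ℕ, X ^ k ∣ f k) : Summable f := by
  rw [summable_iff_summable_coeff]
  intro d
  refine summable_of_ne_finset_zero (s := Finset.range (d + 1)) fun k hk => ?_
  exact X_pow_dvd_iff.1 (h k) d (by simpa using hk)

lemma X_pow_dvd_tsum [T2Space R] {f : ℕ → R⟦X⟧} {k : ℕ} (hf : Summable f)
    (h : ∀ i, X ^ k ∣ f i) : X ^ k ∣ ∑' i, f i := by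
  refine X_pow_dvd_iff.2 fun m hm => ?_
  rw [← ((hasSum_iff_hasSum_coeff (f := f)).1 hf.hasSum m).tsum_eq]
  simp only [X_pow_dvd_iff.1 (h _) m hm, tsum_zero]

end Divisibility

noncomputable section Durfee

/-- The geometric series `1 / (1 - X ^ (i + 1))`, the `i`-th factor of the generating function of
partitions. -/
def geomSeries (i : ℕ) : ℤ⟦X⟧ := ∑' j : ℕ, X ^ ((i + 1) * j)

/-- The inverse `1 / ((1 - X) ⋯ (1 - X ^ n))` of the `q`-Pochhammer symbol `(q)_n`. -/
def invQPochhammer (n : ℕ) : ℤ⟦X⟧ := ∏ i ∈ Finset.range n, geomSeries i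

/-- The generating function of the partition function. -/
def partitionSeries : ℤ⟦X⟧ := PowerSeries.mk fun n => (partitionCount n : ℤ)

lemma hasSum_geomSeries (i : ℕ) :
    HasSum (fun j : ℕ => (X : ℤ⟦X⟧) ^ ((i + 1) * j)) (geomSeries i) := by
  have h := summable_pow_of_constantCoeff_eq_zero (f := (X : ℤ⟦X⟧) ^ (i + 1)) (by simp)
  simp_rw [← pow_mul] at h
  exact h.hasSum

lemma geomSeries_mul_one_sub (i : ℕ) : geomSeries i * (1 - X ^ (i + 1)) = 1 := by
  simpa [geomSeries, pow_mul] using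
    tsum_pow_mul_one_sub_of_constantCoeff_eq_zero (f := (X : ℤ⟦X⟧) ^ (i + 1)) (by simp)

lemma invQPochhammer_eq_succ_mul (n : ℕ) :
    invQPochhammer n = invQPochhammer (n + 1) * (1 - X ^ (n + 1)) := by
  rw [invQPochhammer, invQPochhammer, Finset.prod_range_succ, mul_assoc, geomSeries_mul_one_sub,
    mul_one]

lemma partitionCount_natCast (n : ℕ) : partitionCount n = Fintype.card (Nat.Partition n) := by
  simp [partitionCount]

lemma hasProd_geomSeries : HasProd geomSeries partitionSeries := by
  have h := Nat.Partition.hasProd_powerSeriesMk_card_restricted ℤ (fun _ => True)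
  simpa [Nat.Partition.restricted, geomSeries, partitionSeries, partitionCount_natCast] using! h

lemma X_pow_dvd_invQPochhammer_sub (m j : ℕ) :
    X ^ (m + 1) ∣ invQPochhammer (m + j) - invQPochhammer m := by
  induction j with
  | zero => simp
  | succ j ih =>
    have hsplit : invQPochhammer (m + (j + 1)) - invQPochhammer m =
        (invQPochhammer (m + j) - invQPochhammer m) +
          invQPochhammer (m + j + 1) * X ^ (m + j + 1) := by
      rw [invQPochhammer_eq_succ_mul (m + j)]; ring_nf
    rw [hsplit]
    exact dvd_add ih (Dvd.dvd.mul_left (pow_dvd_pow _ (by omega)) _)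

lemma X_pow_dvd_partitionSeries_sub (m : ℕ) :
    X ^ (m + 1) ∣ partitionSeries - invQPochhammer m := by
  refine X_pow_dvd_iff.2 fun d hd => ?_
  have hlim := (tendsto_iff_coeff_tendsto ..).1 hasProd_geomSeries.tendsto_prod_nat d
  have hconst : Filter.Tendsto (fun n => coeff d (invQPochhammer n)) Filter.atTop
      (nhds (coeff d (invQPochhammer m))) := by
    refine tendsto_atTop_of_eventually_const (i₀ := m) fun n hn => ?_
    obtain ⟨j, rfl⟩ := Nat.exists_eq_add_of_le hn
    simpa [sub_eq_zero] using X_pow_dvd_iff.1 (X_pow_dvd_invQPochhammer_sub m j) d hd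
  rw [map_sub, tendsto_nhds_unique hlim hconst, sub_self]

/-- The terms of `durfeeSeries`. -/
def durfeeTerm (a b L : ℕ) : ℤ⟦X⟧ :=
  X ^ (L * L + L * a) * (invQPochhammer L * invQPochhammer (L + b))

/-- The series `∑ q ^ (L² + a L) / ((q)_L (q)_{L+b})`. For `a = b` this is the decomposition of
partitions by their maximal `L × (L + a)` Durfee rectangle. -/
def durfeeSeries (a b : ℕ) : ℤ⟦X⟧ := ∑' L, durfeeTerm a b L

lemma X_pow_dvd_durfeeTerm (a b : ℕ) {k L : ℕ} (h : k ≤ L * L + L * a) :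
    X ^ k ∣ durfeeTerm a b L :=
  (pow_dvd_pow X h).mul_right _

lemma summable_durfeeTerm (a b : ℕ) : Summable (durfeeTerm a b) :=
  summable_of_forall_X_pow_dvd fun L => X_pow_dvd_durfeeTerm a b (by nlinarith)

lemma durfeeSeries_eq_sub (a b : ℕ) :
    durfeeSeries a b = durfeeSeries a (b + 1) - X ^ (b + 1) * durfeeSeries (a + 1) (b + 1) := by
  have hs := (summable_durfeeTerm (a + 1) (b + 1)).mul_left (X ^ (b + 1))
  rw [durfeeSeries, durfeeSeries, durfeeSeries, ← (summable_durfeeTerm _ _).tsum_mul_left,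
    ← (summable_durfeeTerm _ _).tsum_sub hs]
  refine tsum_congr fun L => ?_
  rw [durfeeTerm, durfeeTerm, durfeeTerm, invQPochhammer_eq_succ_mul (L + b)]
  ring_nf

lemma durfeeSeries_eq_add (a b : ℕ) :
    durfeeSeries a b = durfeeSeries (a + 1) b + X ^ (a + 1) * durfeeSeries (a + 2) (b + 1) := by
  have hterm (L : ℕ) :
      durfeeTerm a b L - durfeeTerm (a + 1) b L = durfeeTerm a b L * (1 - X ^ L) := by
    rw [durfeeTerm, durfeeTerm]; ring
  have hshift (L : ℕ) : durfeeTerm a b (L + 1) * (1 - X ^ (L + 1)) =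
      X ^ (a + 1) * durfeeTerm (a + 2) (b + 1) L := by
    rw [durfeeTerm, durfeeTerm, invQPochhammer_eq_succ_mul L,
      show L + 1 + b = L + (b + 1) by ring]
    ring
  have hs := (summable_durfeeTerm a b).sub (summable_durfeeTerm (a + 1) b)
  rw [← sub_eq_iff_eq_add', durfeeSeries, durfeeSeries,
    ← (summable_durfeeTerm _ _).tsum_sub (summable_durfeeTerm _ _), hs.tsum_eq_zero_add]
  simp only [hterm, hshift, pow_zero, sub_self, mul_zero, zero_add,
    (summable_durfeeTerm _ _).tsum_mul_left, durfeeSeries]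

lemma durfeeSeries_self_succ (m : ℕ) :
    durfeeSeries (m + 1) (m + 1) = durfeeSeries m m := by
  refine sub_eq_zero.1 (eq_zero_of_forall_X_pow_dvd fun k => ?_)
  induction k generalizing m with
  | zero => simp
  | succ k ih =>
    have hrec : durfeeSeries (m + 1) (m + 1) - durfeeSeries m m = X ^ (m + 1) *
        -(durfeeSeries (m + 1 + 1) (m + 1 + 1) - durfeeSeries (m + 1) (m + 1)) := by
      linear_combination -durfeeSeries_eq_sub m m - durfeeSeries_eq_add m (m + 1)
    rw [hrec, pow_succ']
    exact mul_dvd_mul (dvd_pow_self X m.succ_ne_zero) ((ih (m + 1)).neg_right)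

lemma X_pow_dvd_durfeeSeries_sub (m : ℕ) : X ^ m ∣ durfeeSeries m m - invQPochhammer m := by
  have hzero : durfeeTerm m m 0 = invQPochhammer m := by simp [durfeeTerm, invQPochhammer]
  rw [durfeeSeries, (summable_durfeeTerm m m).tsum_eq_zero_add, hzero, add_sub_cancel_left]
  exact X_pow_dvd_tsum ((summable_nat_add_iff 1).2 (summable_durfeeTerm m m)) fun L =>
    X_pow_dvd_durfeeTerm m m (by nlinarith)

lemma durfeeSeries_self (m : ℕ) : durfeeSeries m m = partitionSeries := by
  have hconst (j : ℕ) : durfeeSeries (m + j) (m + j) = durfeeSeries m m := by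
    induction j with
    | zero => rfl
    | succ j ih => exact (durfeeSeries_self_succ _).trans ih
  refine sub_eq_zero.1 (eq_zero_of_forall_X_pow_dvd fun k => ?_)
  have hD := X_pow_dvd_durfeeSeries_sub (m + k)
  have hP := X_pow_dvd_partitionSeries_sub (m + k)
  rw [hconst] at hD
  simpa using dvd_sub ((pow_dvd_pow X (by omega : k ≤ m + k)).trans hD)
    ((pow_dvd_pow X (by omega : k ≤ m + k + 1)).trans hP)

lemma durfeeSeries_self_add_one (m : ℕ) :
    durfeeSeries m (m + 1) = (1 + X ^ (m + 1)) * partitionSeries := by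
  have h := durfeeSeries_eq_sub m m
  rw [durfeeSeries_self, durfeeSeries_self] at h
  linear_combination -h

/-- The terms of `rankSeries`. -/
def rankTerm (ℓ L : ℕ) : ℤ⟦X⟧ :=
  X ^ (L * L + L * (ℓ + 1)) * (invQPochhammer L * invQPochhammer (L + ℓ) * geomSeries (2 * L + ℓ))

/-- The generating function `∑ Vd ℓ (n + ℓ (ℓ + 1) / 2) q ^ n` of strongly concave compositions of
rank `ℓ`, see `Vd_eq_coeff_rankSeries`. Its `L`-th term counts those with `L` parts to the left of
the central part. -/
def rankSeries (ℓ : ℕ) : ℤ⟦X⟧ := ∑' L, rankTerm ℓ L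

lemma summable_rankTerm (ℓ : ℕ) : Summable (rankTerm ℓ) :=
  summable_of_forall_X_pow_dvd fun L => (pow_dvd_pow X (by nlinarith)).mul_right _

/-- The difference between `rankTerm ℓ` and a multiple of `durfeeTerm (ℓ + 1) (ℓ + 2)`. -/
def rankRemainder (ℓ L : ℕ) : ℤ⟦X⟧ :=
  X ^ (L * L + L * (ℓ + 1) + (ℓ + 2)) * ((1 - X ^ L) * (1 - X ^ (L - 1)) *
    (invQPochhammer L * invQPochhammer (L + (ℓ + 2)) * geomSeries (2 * L + ℓ)))

lemma rankTerm_eq_add_rankRemainder (ℓ L : ℕ) :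
    rankTerm ℓ L =
      (1 - X ^ (ℓ + 2)) * durfeeTerm (ℓ + 1) (ℓ + 2) L + rankRemainder ℓ L := by
  have hg := geomSeries_mul_one_sub (2 * L + ℓ)
  rw [rankTerm, durfeeTerm, rankRemainder, invQPochhammer_eq_succ_mul (L + ℓ),
    invQPochhammer_eq_succ_mul (L + ℓ + 1), show L + ℓ + 1 + 1 = L + (ℓ + 2) by ring]
  rcases L with _ | L
  · simp only [Nat.mul_zero, Nat.zero_add, pow_zero, sub_self] at hg ⊢
    linear_combination (invQPochhammer 0 * invQPochhammer (ℓ + 2) * (1 - X ^ (ℓ + 2))) * hg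
  · simp only [Nat.add_sub_cancel]
    linear_combination (X ^ ((L + 1) * (L + 1) + (L + 1) * (ℓ + 1)) *
      (invQPochhammer (L + 1) * invQPochhammer (L + 1 + (ℓ + 2)) * (1 - X ^ (ℓ + 2)))) * hg

lemma rankRemainder_add_two (ℓ L : ℕ) :
    rankRemainder ℓ (L + 2) = X ^ (3 * ℓ + 8) * rankTerm (ℓ + 4) L := by
  rw [rankRemainder, rankTerm, invQPochhammer_eq_succ_mul L, invQPochhammer_eq_succ_mul (L + 1),
    show L + 2 - 1 = L + 1 by omega, show L + 1 + 1 = L + 2 by omega,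
    show L + 2 + (ℓ + 2) = L + (ℓ + 4) by omega,
    show 2 * (L + 2) + ℓ = 2 * L + (ℓ + 4) by omega]
  ring

lemma rankSeries_eq (ℓ : ℕ) :
    rankSeries ℓ =
      (1 - X ^ (2 * ℓ + 4)) * partitionSeries + X ^ (3 * ℓ + 8) * rankSeries (ℓ + 4) := by
  have hs : Summable (rankRemainder ℓ) :=
    summable_of_forall_X_pow_dvd fun L => (pow_dvd_pow X (by nlinarith)).mul_right _
  have hremainder : ∑' L, rankRemainder ℓ L = X ^ (3 * ℓ + 8) * rankSeries (ℓ + 4) := by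
    rw [← hs.sum_add_tsum_nat_add 2]
    rw [tsum_congr (rankRemainder_add_two ℓ), (summable_rankTerm _).tsum_mul_left, ← rankSeries]
    simp [Finset.sum_range_succ, rankRemainder]
  have hdurfee := (summable_durfeeTerm (ℓ + 1) (ℓ + 2)).mul_left (1 - X ^ (ℓ + 2))
  rw [rankSeries, tsum_congr (rankTerm_eq_add_rankRemainder ℓ), hdurfee.tsum_add hs, hremainder,
    (summable_durfeeTerm _ _).tsum_mul_left, ← durfeeSeries, durfeeSeries_self_add_one]
  ring

lemma rankSeries_eq_sum_add (ℓ k : ℕ) :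
    rankSeries ℓ = (∑ n ∈ Finset.range k, (X ^ Q1 n ℓ - X ^ Q2 n ℓ)) * partitionSeries +
      X ^ Q1 k ℓ * rankSeries (ℓ + 4 * k) := by
  induction k with
  | zero => simp [Q1]
  | succ k ih =>
    rw [Finset.sum_range_succ, ih, rankSeries_eq (ℓ + 4 * k), Q2, Q1, Q1]
    ring_nf

end Durfee

end FormalSeries

section Combinatorics

open PowerSeries PowerSeries.WithPiTopology
open scoped PowerSeries.WithPiTopology

section WeightGenFun

variable {R α : Type*} [Semiring R] [TopologicalSpace R] {w : α → ℕ}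

lemma summable_X_pow_of_finite_fibers (hw : ∀ n, {a | w a = n}.Finite) :
    Summable fun a => (X : R⟦X⟧) ^ w a := by
  rw [summable_iff_summable_coeff]
  refine fun d => summable_of_hasFiniteSupport ((hw d).subset fun a ha => ?_)
  by_contra hne
  exact ha ((coeff_X_pow d (w a)).trans (if_neg (Ne.symm hne)))

lemma coeff_eq_ncard_of_hasSum_X_pow [T2Space R] (hw : ∀ n, {a | w a = n}.Finite) {F : R⟦X⟧}
    (hF : HasSum (fun a => (X : R⟦X⟧) ^ w a) F) (n : ℕ) :
    coeff n F = ({a | w a = n}.ncard : R) := by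
  have hfinite : HasSum (fun a => coeff n ((X : R⟦X⟧) ^ w a))
      (∑ a ∈ (hw n).toFinset, coeff n ((X : R⟦X⟧) ^ w a)) := by
    refine hasSum_sum_of_ne_finset_zero fun a ha => ?_
    rw [coeff_X_pow, if_neg fun h => ha (by simp [h])]
  have hone : ∀ a ∈ (hw n).toFinset, coeff n ((X : R⟦X⟧) ^ w a) = 1 := fun a ha => by
    rw [coeff_X_pow, if_pos (by simpa using Eq.symm ((hw n).mem_toFinset.1 ha))]
  rw [((hasSum_iff_hasSum_coeff _).1 hF n).unique hfinite, Finset.sum_congr rfl hone,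
    Set.ncard_eq_toFinset_card _ (hw n), Finset.sum_const, nsmul_one]

end WeightGenFun

/-- The strictly increasing lists of length `L` all of whose entries exceed `c`. -/
abbrev IncList (L c : ℕ) : Type := {l : List ℕ // l.length = L ∧ (c :: l).Pairwise (· < ·)}

lemma IncList.length_le_sum {L c : ℕ} (u : IncList L c) : L ≤ u.1.sum := by
  refine u.2.1.symm.le.trans (List.length_le_sum_of_one_le _ fun i hi => ?_)
  exact Nat.one_le_of_lt ((List.pairwise_cons.1 u.2.2).1 i hi)

lemma finite_setOf_length_le_sum_eq (m n : ℕ) :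
    {l : List ℕ | l.length ≤ m ∧ l.sum = n}.Finite := by
  refine ((List.finite_length_le (Fin (n + 1)) m).image (List.map Fin.val)).subset ?_
  rintro l ⟨hlen, rfl⟩
  have hlt : ∀ x ∈ l, x < l.sum + 1 := fun x hx => Nat.lt_succ_of_le (List.le_sum_of_mem hx)
  exact ⟨l.attach.map fun x => ⟨x.1, hlt x.1 x.2⟩, by simpa using hlen,
    by simp [List.map_map, Function.comp_def]⟩

lemma IncList.finite_setOf_sum_eq (L c n : ℕ) : {u : IncList L c | u.1.sum = n}.Finite := by
  refine Set.Finite.of_finite_image ((finite_setOf_length_le_sum_eq L n).subset ?_)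
    Subtype.val_injective.injOn
  rintro _ ⟨u, hu, rfl⟩
  exact ⟨u.2.1.le, hu⟩

/-- Splitting off the least entry `c + 1 + b` of a nonempty strictly increasing list. -/
def IncList.consEquiv (L c : ℕ) : (Σ b : ℕ, IncList L (c + 1 + b)) ≃ IncList (L + 1) c where
  toFun x := ⟨(c + 1 + x.1) :: x.2.1, by simp [x.2.2.1], by
    have h := x.2.2.2
    simp only [List.pairwise_cons, List.mem_cons, forall_eq_or_imp] at h ⊢
    exact ⟨⟨by omega, fun a ha => by have := h.1 a ha; omega⟩, h⟩⟩
  invFun u := match u with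
    | ⟨[], h⟩ => absurd h.1 (by simp)
    | ⟨a :: l, h⟩ => ⟨a - (c + 1), l, by simpa using h.1, by
        have hc := List.pairwise_cons.1 h.2
        have := hc.1 a (by simp)
        rw [show c + 1 + (a - (c + 1)) = a by omega]
        exact hc.2⟩
  left_inv := by
    rintro ⟨b, l, h⟩
    have hb : c + 1 + b - (c + 1) = b := by omega
    simp only [Sigma.mk.injEq, hb, true_and]
    congr!
  right_inv := by
    rintro ⟨_ | ⟨a, l⟩, h⟩
    · exact absurd h.1 (by simp)
    · have := (List.pairwise_cons.1 h.2).1 a (by simp)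
      refine Subtype.ext ?_
      simp only [List.cons.injEq, and_true]
      omega

lemma IncList.hasSum_X_pow_sum (L c : ℕ) :
    HasSum (fun u : IncList L c => (X : ℤ⟦X⟧) ^ u.1.sum)
      (X ^ (L * (L + 1) / 2 + c * L) * invQPochhammer L) := by
  induction L generalizing c with
  | zero =>
    have hnil (u : IncList 0 c) : u = ⟨[], by simp⟩ :=
      Subtype.ext (List.length_eq_zero_iff.1 u.2.1)
    have : Unique (IncList 0 c) := ⟨⟨_⟩, hnil⟩
    convert hasSum_unique (fun u : IncList 0 c => (X : ℤ⟦X⟧) ^ u.1.sum)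
    simp [invQPochhammer, hnil default]
  | succ L ih =>
    rw [← (IncList.consEquiv L c).hasSum_iff]
    have hs := (IncList.consEquiv L c).summable_iff.2
      (summable_X_pow_of_finite_fibers (R := ℤ) (IncList.finite_setOf_sum_eq (L + 1) c))
    refine HasSum.sigma_of_hasSum (g := fun b => X ^ (c + 1 + b) *
      (X ^ (L * (L + 1) / 2 + (c + 1 + b) * L) * invQPochhammer L)) ?_ (fun b => ?_) hs
    · have htri : (L + 1) * (L + 2) / 2 = L * (L + 1) / 2 + (L + 1) := by
        rw [show (L + 1) * (L + 2) = L * (L + 1) + (L + 1) * 2 by ring,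
          Nat.add_mul_div_right _ _ two_pos]
      convert! (hasSum_geomSeries L).mul_left
        (X ^ ((L + 1) * (L + 2) / 2 + c * (L + 1)) * invQPochhammer L) using 1
      · ext1 b
        rw [htri]
        ring
      · rw [invQPochhammer, invQPochhammer, Finset.prod_range_succ]
        ring
    · simpa [IncList.consEquiv, pow_add] using (ih (c + 1 + b)).mul_left (X ^ (c + 1 + b))

lemma triangle_add_triangle (L ℓ : ℕ) :
    L * (L + 1) / 2 + (L + ℓ) * (L + ℓ + 1) / 2 =
      ℓ * (ℓ + 1) / 2 + L * L + L * (ℓ + 1) := by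
  obtain ⟨a, ha⟩ := Nat.even_mul_succ_self L
  obtain ⟨b, hb⟩ := Nat.even_mul_succ_self ℓ
  obtain ⟨d, hd⟩ := Nat.even_mul_succ_self (L + ℓ)
  have : d + a = b + L * L + L * (ℓ + 1) := by nlinarith
  rw [ha, hb, hd]
  omega

/-- A strongly concave composition of rank `ℓ`, cut at its central part `c`: the `L` parts to the
left, listed from the centre outwards, and the `L + ℓ` parts to the right. -/
abbrev CentredSCC (ℓ : ℕ) : Type := Σ L : ℕ, Σ c : ℕ, IncList L c × IncList (L + ℓ) c

namespace CentredSCC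

variable {ℓ : ℕ}

/-- The sum of the parts. -/
def weight (x : CentredSCC ℓ) : ℕ := x.2.2.1.1.sum + (x.2.1 + x.2.2.2.1.sum)

/-- The composition as a list of parts, with the position of its central part. -/
def toList (x : CentredSCC ℓ) : List ℕ × ℕ :=
  (x.2.2.1.1.reverse ++ x.2.1 :: x.2.2.2.1, x.1 + 1)

lemma sum_toList (x : CentredSCC ℓ) : x.toList.1.sum = x.weight := by
  simp [toList, weight]

lemma length_toList (x : CentredSCC ℓ) : x.toList.1.length = 2 * x.1 + ℓ + 1 := by
  simp [toList, x.2.2.1.2.1, x.2.2.2.2.1]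
  omega

lemma toList_injective : Function.Injective (toList (ℓ := ℓ)) := by
  rintro ⟨L, c, u, v⟩ ⟨L', c', u', v'⟩ h
  simp only [toList, Prod.mk.injEq, Nat.add_right_cancel_iff] at h
  obtain ⟨h, rfl⟩ := h
  have hsplit := List.append_inj h (by simp [u.2.1, u'.2.1])
  simp only [List.reverse_inj, List.cons.injEq] at hsplit
  obtain ⟨hu, rfl, hv⟩ := hsplit
  rw [Subtype.ext hu, Subtype.ext hv]

lemma finite_setOf_weight_eq (ℓ n : ℕ) : {x : CentredSCC ℓ | x.weight = n}.Finite := by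
  refine Set.Finite.of_finite_image (((finite_setOf_length_le_sum_eq (n + 1) n).prod
    (Set.finite_Iic (n + 1))).subset ?_) toList_injective.injOn
  rintro _ ⟨x, rfl, rfl⟩
  have hu := x.2.2.1.length_le_sum
  have hv := x.2.2.2.length_le_sum
  have hw : x.weight = x.2.2.1.1.sum + (x.2.1 + x.2.2.2.1.sum) := rfl
  refine ⟨⟨by rw [length_toList]; omega, x.sum_toList⟩, ?_⟩
  simp only [toList, Set.mem_Iic]
  omega

lemma hasSum_X_pow_weight (ℓ : ℕ) : HasSum (fun x : CentredSCC ℓ => (X : ℤ⟦X⟧) ^ x.weight)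
    (X ^ (ℓ * (ℓ + 1) / 2) * rankSeries ℓ) := by
  have hs : Summable (fun x : CentredSCC ℓ => (X : ℤ⟦X⟧) ^ x.weight) :=
    summable_X_pow_of_finite_fibers (finite_setOf_weight_eq ℓ)
  refine HasSum.sigma_of_hasSum ((summable_rankTerm ℓ).hasSum.mul_left _) (fun L => ?_) hs
  refine HasSum.sigma_of_hasSum (g := fun c => X ^ (L * (L + 1) / 2 + c * L) * invQPochhammer L *
    (X ^ c * (X ^ ((L + ℓ) * (L + ℓ + 1) / 2 + c * (L + ℓ)) * invQPochhammer (L + ℓ))))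
    ?_ (fun c => ?_) (hs.sigma_factor L)
  · convert! (hasSum_geomSeries (2 * L + ℓ)).mul_left
      (X ^ (ℓ * (ℓ + 1) / 2 + L * L + L * (ℓ + 1)) * invQPochhammer L * invQPochhammer (L + ℓ))
      using 1
    · ext1 c
      rw [← triangle_add_triangle]
      ring
    · rw [rankTerm]
      ring
  · have hsplit (x : IncList L c × IncList (L + ℓ) c) :
        (X : ℤ⟦X⟧) ^ weight ⟨L, c, x⟩ = X ^ x.1.1.sum * (X ^ c * X ^ x.2.1.sum) := by
      rw [weight, pow_add, pow_add]
    have hfactor : Summable fun x : IncList L c × IncList (L + ℓ) c =>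
        (X : ℤ⟦X⟧) ^ x.1.1.sum * (X ^ c * X ^ x.2.1.sum) :=
      ((hs.sigma_factor L).sigma_factor c).congr hsplit
    have hmul := (IncList.hasSum_X_pow_sum L c).mul
      ((IncList.hasSum_X_pow_sum (L + ℓ) c).mul_left (X ^ c)) hfactor
    exact hmul.congr_fun hsplit

end CentredSCC

lemma isSCC_iff {n : ℕ} {l : List ℕ} {k : ℕ} :
    IsSCC n l k ↔ 1 ≤ k ∧ k ≤ l.length ∧ l.sum = n ∧
      (l.take k).Pairwise (· > ·) ∧ (l.drop (k - 1)).Pairwise (· < ·) := by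
  refine and_congr_right fun hk => and_congr_right fun hkl => and_congr_right fun _ =>
    and_congr ?_ ?_
  · simp only [List.pairwise_iff_getElem, List.length_take, List.getElem_take]
    exact ⟨fun h i j _ _ hij => h ⟨i, by omega⟩ ⟨j, by omega⟩ hij (by simp only; omega),
      fun h i j hij hj => h i j (by omega) (by omega) hij⟩
  · simp only [List.pairwise_iff_getElem, List.length_drop, List.getElem_drop]
    refine ⟨fun h i j _ _ hij => h ⟨k - 1 + i, by omega⟩ ⟨k - 1 + j, by omega⟩ (by simp)
      (by simpa using hij), fun h i j hi hij => ?_⟩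
    have := h (i - (k - 1)) (j - (k - 1)) (by omega) (by omega) (by omega)
    simpa only [Nat.add_sub_cancel' hi, Nat.add_sub_cancel' (hi.trans hij.le), List.get_eq_getElem]
      using this

namespace CentredSCC

lemma isSCC_toList {ℓ : ℕ} (x : CentredSCC ℓ) : IsSCC x.weight x.toList.1 x.toList.2 := by
  rw [isSCC_iff, sum_toList, length_toList]
  obtain ⟨L, c, u, v⟩ := x
  have hlen : u.1.reverse.length = L := by simp [u.2.1]
  refine ⟨by simp [toList], by simp only [toList]; omega, rfl, ?_, ?_⟩
  · have htake : (u.1.reverse ++ c :: v.1).take (L + 1) = (c :: u.1).reverse := by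
      simp [List.take_append, hlen]
    rw [toList, htake, List.pairwise_reverse]
    exact u.2.2
  · rw [toList, Nat.add_sub_cancel, List.drop_left' hlen]
    exact v.2.2

lemma exists_toList_eq {ℓ n k : ℕ} {l : List ℕ} (h : IsSCC n l k) (hrank : sccRank l k = ℓ) :
    ∃ x : CentredSCC ℓ, x.toList = (l, k) := by
  obtain ⟨hk, hkl, -, htake, hdrop⟩ := isSCC_iff.1 h
  obtain ⟨L, rfl⟩ := Nat.exists_eq_add_of_le' hk
  rw [sccRank] at hrank
  have hL : L < l.length := by omega
  rw [Nat.add_sub_cancel, List.drop_eq_getElem_cons hL] at hdrop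
  rw [← List.take_concat_get' l L hL, ← List.pairwise_reverse, List.reverse_append] at htake
  refine ⟨⟨L, l[L], ⟨(l.take L).reverse, ?_, by simpa using htake⟩,
    ⟨l.drop (L + 1), ?_, hdrop⟩⟩, ?_⟩
  · simp only [List.length_reverse, List.length_take]
    omega
  · rw [List.length_drop]
    omega
  · simp only [toList, List.reverse_reverse, ← List.drop_eq_getElem_cons hL,
      List.take_append_drop]

lemma toList_image_setOf_weight_eq (ℓ n : ℕ) :
    toList '' {x : CentredSCC ℓ | x.weight = n} =
      {p : List ℕ × ℕ | IsSCC n p.1 p.2 ∧ sccRank p.1 p.2 = ℓ} := by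
  refine Set.Subset.antisymm ?_ ?_
  · rintro _ ⟨x, rfl, rfl⟩
    refine ⟨x.isSCC_toList, ?_⟩
    rw [sccRank, length_toList, toList]
    push_cast
    ring
  · rintro ⟨l, k⟩ ⟨h, hrank⟩
    obtain ⟨x, hx⟩ := exists_toList_eq h hrank
    refine ⟨x, ?_, hx⟩
    rw [Set.mem_ofPred_eq, ← x.sum_toList, hx]
    exact h.2.2.1

end CentredSCC

lemma Vd_eq_coeff_rankSeries (ℓ N : ℕ) :
    (Vd ℓ (N + ℓ * (ℓ + 1) / 2) : ℤ) = coeff N (rankSeries ℓ) := by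
  rw [Vd, ← CentredSCC.toList_image_setOf_weight_eq,
    Set.ncard_image_of_injective _ CentredSCC.toList_injective,
    ← coeff_eq_ncard_of_hasSum_X_pow (CentredSCC.finite_setOf_weight_eq ℓ)
      (CentredSCC.hasSum_X_pow_weight ℓ), coeff_X_pow_mul]

lemma coeff_X_pow_mul_partitionSeries (N Q : ℕ) :
    coeff N (X ^ Q * partitionSeries) = (partitionCount ((N : ℤ) - Q) : ℤ) := by
  rw [coeff_X_pow_mul']
  split_ifs with h
  · rw [partitionSeries, coeff_mk, Nat.cast_sub h]
  · rw [partitionCount, if_neg (by omega), Nat.cast_zero]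

lemma Vd_eq_sum_partitionCount {ℓ N k : ℕ} (hk : N < k) :
    (Vd ℓ (N + ℓ * (ℓ + 1) / 2) : ℤ) = ∑ n ∈ Finset.range k,
      ((partitionCount ((N : ℤ) - Q1 n ℓ) : ℤ) - partitionCount ((N : ℤ) - Q2 n ℓ)) := by
  have hN : N < Q1 k ℓ := by rw [Q1]; nlinarith
  rw [Vd_eq_coeff_rankSeries, rankSeries_eq_sum_add ℓ k, map_add, coeff_X_pow_mul',
    if_neg hN.not_ge, add_zero, Finset.sum_mul, map_sum]
  refine Finset.sum_congr rfl fun n _ => ?_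
  rw [sub_mul, map_sub, coeff_X_pow_mul_partitionSeries, coeff_X_pow_mul_partitionSeries]

end Combinatorics

noncomputable section Evaluation

open PowerSeries

variable {𝕜 : Type*} [RCLike 𝕜] {f g : ℤ⟦X⟧} {z : 𝕜}

/-- The value at `z` of a power series with integer coefficients (`0` if the series diverges). -/
def evalSeries (f : ℤ⟦X⟧) (z : 𝕜) : 𝕜 := ∑' n, ((coeff n f : ℤ) : 𝕜) * z ^ n

/-- Absolute convergence of a power series with integer coefficients at the point `z`. -/
def SummableAt (f : ℤ⟦X⟧) (z : 𝕜) : Prop := Summable fun n => ‖((coeff n f : ℤ) : 𝕜) * z ^ n‖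

lemma coeff_mul_mul_pow (f g : ℤ⟦X⟧) (z : 𝕜) (n : ℕ) :
    ((coeff n (f * g) : ℤ) : 𝕜) * z ^ n = ∑ kl ∈ Finset.HasAntidiagonal.antidiagonal n,
      (((coeff kl.1 f : ℤ) : 𝕜) * z ^ kl.1) * (((coeff kl.2 g : ℤ) : 𝕜) * z ^ kl.2) := by
  rw [coeff_mul, Int.cast_sum, Finset.sum_mul]
  refine Finset.sum_congr rfl fun kl hkl => ?_
  rw [← Finset.HasAntidiagonal.mem_antidiagonal.1 hkl]
  push_cast
  ring

lemma SummableAt.mul (hf : SummableAt f z) (hg : SummableAt g z) : SummableAt (f * g) z := by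
  simpa only [SummableAt, coeff_mul_mul_pow] using
    summable_norm_sum_mul_antidiagonal_of_summable_norm hf hg

lemma evalSeries_mul (hf : SummableAt f z) (hg : SummableAt g z) :
    evalSeries (f * g) z = evalSeries f z * evalSeries g z := by
  simpa only [evalSeries, coeff_mul_mul_pow] using
    (tsum_mul_tsum_eq_tsum_sum_antidiagonal_of_summable_norm hf hg).symm

lemma coeff_coe_mul_pow_eq_zero (p : Polynomial ℤ) (z : 𝕜) {n : ℕ}
    (hn : n ∉ Finset.range (p.natDegree + 1)) :
    ((coeff n (p : ℤ⟦X⟧) : ℤ) : 𝕜) * z ^ n = 0 := by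
  rw [Polynomial.coeff_coe, Polynomial.coeff_eq_zero_of_natDegree_lt (by simpa using hn),
    Int.cast_zero, zero_mul]

lemma summableAt_coe (p : Polynomial ℤ) (z : 𝕜) : SummableAt (p : ℤ⟦X⟧) z :=
  summable_of_ne_finset_zero fun n hn => by rw [coeff_coe_mul_pow_eq_zero p z hn, norm_zero]

lemma evalSeries_coe (p : Polynomial ℤ) (z : 𝕜) :
    evalSeries (p : ℤ⟦X⟧) z = Polynomial.aeval z p := by
  rw [evalSeries, tsum_eq_sum fun n hn => coeff_coe_mul_pow_eq_zero p z hn,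
    Polynomial.aeval_eq_sum_range]
  simp [zsmul_eq_mul]

lemma coeff_geomSeries_mem_Icc (i n : ℕ) : coeff n (geomSeries i) ∈ Set.Icc 0 1 := by
  induction n using Nat.strong_induction_on with
  | _ n ih =>
    have hrec : geomSeries i = 1 + X ^ (i + 1) * geomSeries i := by
      linear_combination geomSeries_mul_one_sub i
    rw [hrec, map_add, coeff_one, coeff_X_pow_mul']
    rcases Nat.eq_zero_or_pos n with rfl | hn
    · simp
    · rw [if_neg hn.ne', zero_add]
      split_ifs with hin
      · exact ih (n - (i + 1)) (by omega)
      · simp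

lemma summableAt_geomSeries (i : ℕ) (hz : ‖z‖ < 1) : SummableAt (geomSeries i) z := by
  refine (summable_geometric_of_lt_one (norm_nonneg z) hz).of_nonneg_of_le
    (fun _ => norm_nonneg _) fun n => ?_
  obtain ⟨h0, h1⟩ := coeff_geomSeries_mem_Icc i n
  have hcoeff : ‖((coeff n (geomSeries i) : ℤ) : 𝕜)‖ ≤ 1 := by
    obtain h | h : coeff n (geomSeries i) = 0 ∨ coeff n (geomSeries i) = 1 := by omega
    all_goals simp [h]
  rw [norm_mul, norm_pow]
  exact mul_le_of_le_one_left (by positivity) hcoeff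

lemma evalSeries_geomSeries (i : ℕ) (hz : ‖z‖ < 1) :
    evalSeries (geomSeries i) z = (1 - z ^ (i + 1))⁻¹ := by
  have hcoe : ((1 - Polynomial.X ^ (i + 1) : Polynomial ℤ) : ℤ⟦X⟧) = 1 - X ^ (i + 1) := by simp
  have hlin : evalSeries (1 - X ^ (i + 1) : ℤ⟦X⟧) z = 1 - z ^ (i + 1) := by
    rw [← hcoe, evalSeries_coe]
    simp
  have hone : evalSeries (1 : ℤ⟦X⟧) z = 1 := by simpa using evalSeries_coe 1 z
  refine eq_inv_of_mul_eq_one_left ?_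
  rw [← hlin, ← evalSeries_mul (summableAt_geomSeries i hz) (hcoe ▸ summableAt_coe _ z),
    geomSeries_mul_one_sub, hone]

lemma invQPochhammer_succ (m : ℕ) :
    invQPochhammer (m + 1) = invQPochhammer m * geomSeries m :=
  Finset.prod_range_succ _ _

lemma summableAt_invQPochhammer (m : ℕ) (hz : ‖z‖ < 1) : SummableAt (invQPochhammer m) z := by
  induction m with
  | zero => simpa [invQPochhammer] using summableAt_coe 1 z
  | succ m ih => exact invQPochhammer_succ m ▸ ih.mul (summableAt_geomSeries m hz)

lemma evalSeries_invQPochhammer (m : ℕ) (hz : ‖z‖ < 1) :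
    evalSeries (invQPochhammer m) z = ∏ i ∈ Finset.range m, (1 - z ^ (i + 1))⁻¹ := by
  induction m with
  | zero => simpa [invQPochhammer] using evalSeries_coe 1 z
  | succ m ih =>
    rw [Finset.prod_range_succ, ← ih, ← evalSeries_geomSeries m hz, invQPochhammer_succ,
      evalSeries_mul (summableAt_invQPochhammer m hz) (summableAt_geomSeries m hz)]

lemma coeff_invQPochhammer_nonneg (m n : ℕ) : 0 ≤ coeff n (invQPochhammer m) := by
  induction m generalizing n with
  | zero => rw [invQPochhammer, Finset.prod_range_zero, coeff_one]; split_ifs <;> simp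
  | succ m ih =>
    rw [invQPochhammer_succ, coeff_mul]
    exact Finset.sum_nonneg fun kl _ => mul_nonneg (ih _) (coeff_geomSeries_mem_Icc m _).1

lemma coeff_invQPochhammer_monotone (n : ℕ) :
    Monotone fun m => coeff n (invQPochhammer m) := by
  refine monotone_nat_of_le_succ fun m => ?_
  have hrec : invQPochhammer (m + 1) = invQPochhammer m + X ^ (m + 1) * invQPochhammer (m + 1) := by
    linear_combination -invQPochhammer_eq_succ_mul m
  rw [hrec, map_add, coeff_X_pow_mul']
  refine le_add_of_nonneg_right ?_
  split_ifs
  · exact coeff_invQPochhammer_nonneg _ _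
  · exact le_rfl

lemma coeff_invQPochhammer_of_le {m n : ℕ} (h : n ≤ m) :
    coeff n (invQPochhammer m) = partitionCount n := by
  have hdvd := X_pow_dvd_iff.1 (X_pow_dvd_partitionSeries_sub m) n (by omega)
  rw [map_sub, sub_eq_zero, partitionSeries, coeff_mk] at hdvd
  exact hdvd.symm

lemma coeff_invQPochhammer_le (m n : ℕ) : coeff n (invQPochhammer m) ≤ partitionCount n := by
  rw [← coeff_invQPochhammer_of_le (le_max_left n m)]
  exact coeff_invQPochhammer_monotone n (le_max_right n m)

lemma prod_inv_one_sub_pow_le_exp {x : ℝ} (h0 : 0 ≤ x) (h1 : x < 1) (m : ℕ) :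
    ∏ i ∈ Finset.range m, (1 - x ^ (i + 1))⁻¹ ≤ Real.exp ((1 - x)⁻¹ * (1 - x)⁻¹) := by
  have hx : 0 < 1 - x := sub_pos.2 h1
  have hpow (i : ℕ) : x ^ (i + 1) ≤ x := pow_le_of_le_one h0 h1.le i.succ_ne_zero
  have hfactor (i : ℕ) : (1 - x ^ (i + 1))⁻¹ ≤ Real.exp (x ^ i * (1 - x)⁻¹) := by
    have hi : 0 < 1 - x ^ (i + 1) := hx.trans_le (by linarith [hpow i])
    calc (1 - x ^ (i + 1))⁻¹ = x ^ (i + 1) * (1 - x ^ (i + 1))⁻¹ + 1 := by field_simp; ring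
      _ ≤ x ^ i * (1 - x)⁻¹ + 1 := by
        gcongr ?_ * ?_ + 1
        · exact pow_le_pow_of_le_one h0 h1.le i.le_succ
        · gcongr
          exact hpow i
      _ ≤ Real.exp (x ^ i * (1 - x)⁻¹) := Real.add_one_le_exp _
  calc ∏ i ∈ Finset.range m, (1 - x ^ (i + 1))⁻¹
      ≤ ∏ i ∈ Finset.range m, Real.exp (x ^ i * (1 - x)⁻¹) :=
        Finset.prod_le_prod (fun i _ => inv_nonneg.2 (by linarith [hpow i])) fun i _ => hfactor i
    _ = Real.exp ((∑ i ∈ Finset.range m, x ^ i) * (1 - x)⁻¹) := by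
        rw [← Real.exp_sum, Finset.sum_mul]
    _ ≤ Real.exp ((1 - x)⁻¹ * (1 - x)⁻¹) := by
        gcongr
        rw [← tsum_geometric_of_lt_one h0 h1]
        exact (summable_geometric_of_lt_one h0 h1).sum_le_tsum _ fun i _ => by positivity

lemma summable_partitionCount_mul_pow {x : ℝ} (h0 : 0 ≤ x) (h1 : x < 1) :
    Summable fun n : ℕ => (partitionCount n : ℝ) * x ^ n := by
  have hx : ‖x‖ < 1 := by rwa [Real.norm_of_nonneg h0]
  refine summable_of_sum_range_le (fun n => by positivity) fun K =>
    le_trans ?_ (prod_inv_one_sub_pow_le_exp h0 h1 K)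
  rw [← evalSeries_invQPochhammer K hx]
  refine le_trans (le_of_eq (Finset.sum_congr rfl fun n hn => ?_))
    ((summableAt_invQPochhammer K hx).of_norm.sum_le_tsum (Finset.range K) fun n _ => ?_)
  · rw [coeff_invQPochhammer_of_le (Finset.mem_range.1 hn).le, Int.cast_natCast]
  · exact mul_nonneg (Int.cast_nonneg (coeff_invQPochhammer_nonneg K n)) (pow_nonneg h0 n)

/-- The value `∑ p(n) z ^ n` of the generating function of partitions. -/
def partitionGenFun (z : 𝕜) : 𝕜 := ∑' n : ℕ, (partitionCount n : 𝕜) * z ^ n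

lemma tendsto_prod_inv_one_sub_pow (hz : ‖z‖ < 1) :
    Filter.Tendsto (fun m => ∏ i ∈ Finset.range m, (1 - z ^ (i + 1))⁻¹) Filter.atTop
      (nhds (partitionGenFun z)) := by
  simp_rw [← evalSeries_invQPochhammer _ hz]
  refine tendsto_tsum_of_dominated_convergence
    (summable_partitionCount_mul_pow (norm_nonneg z) hz) (fun n => ?_) (.of_forall fun m n => ?_)
  · refine tendsto_atTop_of_eventually_const (i₀ := n) fun m hm => ?_
    rw [coeff_invQPochhammer_of_le hm, Int.cast_natCast]
  · obtain ⟨c, hc⟩ := Int.eq_ofNat_of_zero_le (coeff_invQPochhammer_nonneg m n)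
    have hle := coeff_invQPochhammer_le m n
    rw [hc] at hle ⊢
    rw [norm_mul, norm_pow, Int.cast_natCast, RCLike.norm_natCast]
    gcongr
    exact_mod_cast hle

/-- The exponents in `log ∑ p(n) z ^ n = ∑ z ^ ((k + 1) m) / m`, a sum over pairs `(m, k)`. -/
def jumpSize (x : ℕ × ℕ) : ℕ := (x.2 + 1) * x.1

lemma partitionGenFun_eq_exp {z S : ℂ} (hz : ‖z‖ < 1)
    (hS : HasSum (fun x : ℕ × ℕ => z ^ jumpSize x / (x.1 : ℂ)) S) :
    partitionGenFun z = Complex.exp S := by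
  have hpow (i : ℕ) : ‖z ^ (i + 1)‖ < 1 := by
    rw [norm_pow]
    exact pow_lt_one₀ (norm_nonneg _) hz i.succ_ne_zero
  have hlog : HasSum (fun i : ℕ => -Complex.log (1 - z ^ (i + 1))) S := by
    refine ((Equiv.prodComm ℕ ℕ).hasSum_iff.2 hS).prod_fiberwise fun i => ?_
    simpa only [Function.comp_apply, Equiv.prodComm_apply, Prod.swap_prod_mk, jumpSize, ← pow_mul]
      using Complex.hasSum_taylorSeries_neg_log (hpow i)
  have hexp := (Complex.continuous_exp.tendsto S).comp hlog.tendsto_sum_nat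
  refine tendsto_nhds_unique (tendsto_prod_inv_one_sub_pow hz) (hexp.congr fun m => ?_)
  rw [Function.comp_apply, Complex.exp_sum]
  refine Finset.prod_congr rfl fun i _ => ?_
  have hne : 1 - z ^ (i + 1) ≠ 0 := fun h => by
    simpa [← sub_eq_zero.1 h] using hpow i
  rw [Complex.exp_neg, Complex.exp_log hne]

end Evaluation

noncomputable section JumpMoments

variable {t : ℝ}

/-- The rate of the jump `(m, k)` of the compound Poisson law with generating function
`z ↦ P(e ^ (-t) z) / P(e ^ (-t))`, `P` being the generating function of partitions. It vanishes for
`m = 0`, as `x / 0 = 0`. -/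
def jumpRate (t : ℝ) (x : ℕ × ℕ) : ℝ := Real.exp (-(jumpSize x * t)) / x.1

/-- The `p`-th moment of the jump sizes with respect to the rates `jumpRate t`. -/
def jumpMoment (p : ℕ) (t : ℝ) : ℝ := ∑' x, (jumpSize x : ℝ) ^ p * jumpRate t x

lemma jumpRate_nonneg (t : ℝ) (x : ℕ × ℕ) : 0 ≤ jumpRate t x := by
  unfold jumpRate
  positivity

lemma jumpRate_eq_mul_pow (t : ℝ) (m k : ℕ) :
    jumpRate t (m, k) = Real.exp (-(m * t)) / m * Real.exp (-(m * t)) ^ k := by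
  rw [jumpRate, jumpSize, ← Real.exp_nat_mul, div_mul_eq_mul_div, ← Real.exp_add]
  congr 2
  push_cast
  ring

lemma hasSum_jumpRate_row (ht : 0 < t) (m : ℕ) : HasSum (fun k => jumpRate t (m, k))
    (Real.exp (-(m * t)) / m * (1 - Real.exp (-(m * t)))⁻¹) := by
  simp_rw [jumpRate_eq_mul_pow]
  rcases Nat.eq_zero_or_pos m with rfl | hm
  · simp
  · refine (hasSum_geometric_of_lt_one (Real.exp_nonneg _) ?_).mul_left _
    rw [Real.exp_lt_one_iff, neg_lt_zero]
    positivity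

lemma exp_neg_mul_inv_one_sub_exp_neg_le {x : ℝ} (hx : 0 < x) :
    Real.exp (-x) * (1 - Real.exp (-x))⁻¹ ≤ x⁻¹ := by
  have hinv : Real.exp (-x) * (1 - Real.exp (-x))⁻¹ = (Real.exp x - 1)⁻¹ := by
    rw [Real.exp_neg, ← mul_inv, mul_sub, mul_one, mul_inv_cancel₀ (Real.exp_ne_zero x)]
  rw [hinv]
  exact inv_anti₀ hx (by linarith [Real.add_one_le_exp x])

lemma tsum_jumpRate_row_le (ht : 0 < t) (m : ℕ) :
    ∑' k, jumpRate t (m, k) ≤ 1 / (m : ℝ) ^ 2 * t⁻¹ := by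
  rw [(hasSum_jumpRate_row ht m).tsum_eq]
  rcases Nat.eq_zero_or_pos m with rfl | hm
  · simp
  · calc Real.exp (-(m * t)) / m * (1 - Real.exp (-(m * t)))⁻¹
        = 1 / m * (Real.exp (-(m * t)) * (1 - Real.exp (-(m * t)))⁻¹) := by ring
      _ ≤ 1 / m * (m * t)⁻¹ := by
        gcongr
        exact exp_neg_mul_inv_one_sub_exp_neg_le (by positivity)
      _ = 1 / (m : ℝ) ^ 2 * t⁻¹ := by field_simp

lemma summable_jumpRate (ht : 0 < t) : Summable (jumpRate t) :=
  (summable_prod_of_nonneg (jumpRate_nonneg t)).2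
    ⟨fun m => (hasSum_jumpRate_row ht m).summable,
      (hasSum_zeta_two.summable.mul_right t⁻¹).of_nonneg_of_le
        (fun _ => tsum_nonneg fun _ => jumpRate_nonneg t _) (tsum_jumpRate_row_le ht)⟩

lemma tsum_jumpRate_le (ht : 0 < t) : ∑' x, jumpRate t x ≤ π ^ 2 / 6 * t⁻¹ := by
  rw [(summable_jumpRate ht).tsum_prod, ← hasSum_zeta_two.tsum_eq, ← tsum_mul_right]
  exact Summable.tsum_le_tsum (tsum_jumpRate_row_le ht) (summable_jumpRate ht).prod
    (hasSum_zeta_two.summable.mul_right t⁻¹)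

lemma pow_mul_jumpRate_le (ht : 0 < t) (p : ℕ) (x : ℕ × ℕ) :
    (jumpSize x : ℝ) ^ p * jumpRate t x ≤ 2 ^ p * p.factorial / t ^ p * jumpRate (t / 2) x := by
  have hhalf : Real.exp (-(jumpSize x * (t / 2))) =
      Real.exp (jumpSize x * (t / 2)) * Real.exp (-(jumpSize x * t)) := by
    rw [← Real.exp_add]
    ring_nf
  have hpow : (jumpSize x : ℝ) ^ p ≤
      2 ^ p * p.factorial / t ^ p * Real.exp (jumpSize x * (t / 2)) := by
    calc (jumpSize x : ℝ) ^ p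
        = 2 ^ p * p.factorial / t ^ p * ((jumpSize x * (t / 2)) ^ p / p.factorial) := by
          rw [mul_pow, div_pow]
          field_simp
      _ ≤ _ := by
          gcongr
          exact Real.pow_div_factorial_le_exp _ (by positivity) p
  calc (jumpSize x : ℝ) ^ p * jumpRate t x
      ≤ 2 ^ p * p.factorial / t ^ p * Real.exp (jumpSize x * (t / 2)) * jumpRate t x := by
        gcongr
        exact jumpRate_nonneg t x
    _ = 2 ^ p * p.factorial / t ^ p * jumpRate (t / 2) x := by
        rw [jumpRate, jumpRate, hhalf]
        ring

lemma summable_pow_mul_jumpRate (ht : 0 < t) (p : ℕ) :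
    Summable fun x => (jumpSize x : ℝ) ^ p * jumpRate t x :=
  ((summable_jumpRate (half_pos ht)).mul_left _).of_nonneg_of_le
    (fun x => mul_nonneg (by positivity) (jumpRate_nonneg t x)) (pow_mul_jumpRate_le ht p)

lemma jumpMoment_nonneg (p : ℕ) (t : ℝ) : 0 ≤ jumpMoment p t :=
  tsum_nonneg fun x => mul_nonneg (by positivity) (jumpRate_nonneg t x)

lemma jumpMoment_le (ht : 0 < t) (p : ℕ) :
    jumpMoment p t ≤ 2 ^ (p + 1) * p.factorial * (π ^ 2 / 6) / t ^ (p + 1) :=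
  calc jumpMoment p t ≤ ∑' x, 2 ^ p * p.factorial / t ^ p * jumpRate (t / 2) x :=
        Summable.tsum_le_tsum (pow_mul_jumpRate_le ht p) (summable_pow_mul_jumpRate ht p)
          ((summable_jumpRate (half_pos ht)).mul_left _)
    _ = 2 ^ p * p.factorial / t ^ p * ∑' x, jumpRate (t / 2) x := tsum_mul_left
    _ ≤ 2 ^ p * p.factorial / t ^ p * (π ^ 2 / 6 * (t / 2)⁻¹) := by
        gcongr
        exact tsum_jumpRate_le (half_pos ht)
    _ = 2 ^ (p + 1) * p.factorial * (π ^ 2 / 6) / t ^ (p + 1) := by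
        field_simp
        ring

lemma hasSum_jumpSize_mul_jumpRate_row (ht : 0 < t) {m : ℕ} (hm : 0 < m) :
    HasSum (fun k => (jumpSize (m, k) : ℝ) * jumpRate t (m, k))
      (Real.exp (-(m * t)) / (1 - Real.exp (-(m * t))) ^ 2) := by
  have hlt : ‖Real.exp (-(m * t))‖ < 1 := by
    rw [Real.norm_of_nonneg (Real.exp_nonneg _), Real.exp_lt_one_iff, neg_lt_zero]
    positivity
  have hterm (k : ℕ) : (jumpSize (m, k) : ℝ) * jumpRate t (m, k) =
      ((k + 1 : ℕ) : ℝ) * Real.exp (-(m * t)) ^ (k + 1) := by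
    rw [jumpRate_eq_mul_pow, jumpSize]
    push_cast
    field_simp
    ring
  simp_rw [hterm]
  rw [hasSum_nat_add_iff (f := fun k : ℕ => (k : ℝ) * Real.exp (-(m * t)) ^ k) 1,
    Finset.sum_range_one, Nat.cast_zero, zero_mul, add_zero]
  exact hasSum_coe_mul_geometric_of_norm_lt_one hlt

lemma exp_neg_div_one_sub_exp_neg_sq_le {x : ℝ} (hx : 0 < x) :
    Real.exp (-x) / (1 - Real.exp (-x)) ^ 2 ≤ 1 / x ^ 2 := by
  have hsinh : Real.exp (-x) / (1 - Real.exp (-x)) ^ 2 = 1 / (2 * Real.sinh (x / 2)) ^ 2 := by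
    have hsq : Real.exp (-x) = Real.exp (-(x / 2)) ^ 2 := by
      rw [← Real.exp_nat_mul]
      ring_nf
    have hsub : 1 - Real.exp (-x) = Real.exp (-(x / 2)) * (2 * Real.sinh (x / 2)) := by
      rw [Real.sinh_eq, hsq, Real.exp_neg]
      field_simp
    rw [hsub, hsq, mul_pow, div_mul_cancel_left₀ (by positivity), one_div]
  rw [hsinh]
  gcongr
  linarith [Real.self_le_sinh_iff.2 (half_pos hx).le]

lemma one_div_sq_sub_one_div_le {x : ℝ} (hx : 0 < x) :
    1 / x ^ 2 - 1 / x ≤ Real.exp (-x) / (1 - Real.exp (-x)) ^ 2 := by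
  have hlt : 0 < 1 - Real.exp (-x) := sub_pos.2 (Real.exp_lt_one_iff.2 (neg_lt_zero.2 hx))
  have hle := Real.add_one_le_exp (-x)
  calc 1 / x ^ 2 - 1 / x = (-x + 1) / x ^ 2 := by field_simp; ring
    _ ≤ Real.exp (-x) / x ^ 2 := by gcongr
    _ ≤ Real.exp (-x) / (1 - Real.exp (-x)) ^ 2 := by gcongr; linarith

lemma min_one_div_le_rpow {x : ℝ} (hx : 0 < x) : min (1 / x) (1 / x ^ 2) ≤ x ^ (-(5 / 4) : ℝ) := by
  rcases le_total x 1 with h | h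
  · refine (min_le_left _ _).trans ?_
    rw [one_div, ← Real.rpow_neg_one]
    exact Real.rpow_le_rpow_of_exponent_ge hx h (by norm_num)
  · refine (min_le_right _ _).trans ?_
    rw [one_div, ← Real.rpow_natCast, ← Real.rpow_neg hx.le]
    exact Real.rpow_le_rpow_of_exponent_le h (by norm_num)

lemma abs_one_div_sq_sub_le_rpow {x : ℝ} (hx : 0 < x) :
    |1 / x ^ 2 - Real.exp (-x) / (1 - Real.exp (-x)) ^ 2| ≤ x ^ (-(5 / 4) : ℝ) := by
  have hnonneg : 0 ≤ Real.exp (-x) / (1 - Real.exp (-x)) ^ 2 := by positivity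
  have hupper := exp_neg_div_one_sub_exp_neg_sq_le hx
  have hlower := one_div_sq_sub_one_div_le hx
  rw [abs_of_nonneg (by linarith)]
  exact (le_min (by linarith) (by linarith)).trans (min_one_div_le_rpow hx)

lemma abs_sub_jumpMoment_one_le (ht : 0 < t) :
    |π ^ 2 / (6 * t ^ 2) - jumpMoment 1 t| ≤
      (∑' m : ℕ, (m : ℝ) ^ (-(5 / 4) : ℝ)) * t ^ (-(5 / 4) : ℝ) := by
  have hrows : HasSum (fun m : ℕ => ∑' k, (jumpSize (m, k) : ℝ) * jumpRate t (m, k))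
      (jumpMoment 1 t) := by
    have hsum := summable_pow_mul_jumpRate ht 1
    simpa only [jumpMoment, pow_one] using
      hsum.hasSum.prod_fiberwise fun m => (hsum.prod_factor m).hasSum
  have hzeta : HasSum (fun m : ℕ => 1 / (m : ℝ) ^ 2 * (t ^ 2)⁻¹) (π ^ 2 / (6 * t ^ 2)) := by
    rw [← div_div, div_eq_mul_inv _ (t ^ 2)]
    exact hasSum_zeta_two.mul_right _
  have hrow (m : ℕ) : ‖1 / (m : ℝ) ^ 2 * (t ^ 2)⁻¹ -
      ∑' k, (jumpSize (m, k) : ℝ) * jumpRate t (m, k)‖ ≤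
        (m : ℝ) ^ (-(5 / 4) : ℝ) * t ^ (-(5 / 4) : ℝ) := by
    rcases Nat.eq_zero_or_pos m with rfl | hm
    · simp [jumpSize]
    · have hsq : 1 / (m : ℝ) ^ 2 * (t ^ 2)⁻¹ = 1 / (m * t) ^ 2 := by field_simp
      rw [(hasSum_jumpSize_mul_jumpRate_row ht hm).tsum_eq, hsq,
        ← Real.mul_rpow m.cast_nonneg ht.le]
      exact abs_one_div_sq_sub_le_rpow (by positivity)
  have hS : Summable fun m : ℕ => (m : ℝ) ^ (-(5 / 4) : ℝ) :=
    Real.summable_nat_rpow.2 (by norm_num)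
  rw [← tsum_mul_right, ← (hzeta.sub hrows).tsum_eq]
  exact tsum_of_norm_bounded (hS.mul_right _).hasSum hrow

end JumpMoments

noncomputable section FourierSeries

open intervalIntegral

variable {a : ℤ → ℂ}

/-- The Fourier series with coefficients `a`. -/
def fourierSum (a : ℤ → ℂ) (θ : ℝ) : ℂ := ∑' k, a k * Circle.exp (k * θ)

lemma norm_mul_circleExp (c : ℂ) (x : ℝ) : ‖c * Circle.exp x‖ = ‖c‖ := by
  rw [norm_mul, Circle.norm_coe, mul_one]

lemma hasSum_fourierSum (ha : Summable a) (θ : ℝ) :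
    HasSum (fun k => a k * Circle.exp (k * θ)) (fourierSum a θ) :=
  (Summable.of_norm (by simpa only [norm_mul_circleExp] using ha.norm)).hasSum

lemma continuous_fourierSum (ha : Summable a) : Continuous (fourierSum a) :=
  continuous_tsum (fun k => by fun_prop) ha.norm fun k θ => (norm_mul_circleExp _ _).le

lemma continuous_fourierSum_mul (ha : Summable a) (n : ℤ) :
    Continuous fun θ : ℝ => fourierSum a θ * Circle.exp (-(n * θ)) := by
  have := continuous_fourierSum ha
  fun_prop

lemma integral_circleExp_intCast_mul (n : ℤ) :
    ∫ θ in -π..π, (Circle.exp (n * θ) : ℂ) = if n = 0 then 2 * (π : ℂ) else 0 := by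
  split_ifs with h
  · simp [h, two_mul]
  · have hc : (n : ℂ) * Complex.I ≠ 0 := by simp [h]
    have hexp (θ : ℝ) : (Circle.exp (n * θ) : ℂ) = Complex.exp (n * Complex.I * θ) := by
      rw [Circle.coe_exp]
      push_cast
      ring_nf
    simp_rw [hexp]
    rw [integral_exp_mul_complex hc, div_eq_zero_iff, sub_eq_zero,
      Complex.exp_eq_exp_iff_exists_int]
    exact .inl ⟨n, by push_cast; ring⟩

lemma integral_fourierSum_mul_circleExp (ha : Summable a) (n : ℤ) :
    ∫ θ in -π..π, fourierSum a θ * Circle.exp (-(n * θ)) = 2 * π * a n := by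
  have hterm (k : ℤ) : ∫ θ in -π..π, a k * Circle.exp (k * θ) * Circle.exp (-(n * θ)) =
      if k = n then 2 * π * a n else 0 := by
    have hexp (θ : ℝ) : a k * Circle.exp (k * θ) * Circle.exp (-(n * θ)) =
        a k * Circle.exp ((k - n : ℤ) * θ) := by
      rw [mul_assoc, ← Circle.coe_mul, ← Circle.exp_add]
      push_cast
      ring_nf
    simp_rw [hexp, integral_const_mul, integral_circleExp_intCast_mul, sub_eq_zero]
    split_ifs with h
    · rw [h, mul_comm]
    · rw [mul_zero]
  have hsum : HasSum (fun k => ∫ θ in -π..π, a k * Circle.exp (k * θ) * Circle.exp (-(n * θ)))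
      (∫ θ in -π..π, fourierSum a θ * Circle.exp (-(n * θ))) := by
    refine hasSum_integral_of_dominated_convergence (fun k _ => ‖a k‖) (fun k => ?_)
      (fun k => .of_forall fun θ _ => ?_) (.of_forall fun _ _ => ha.norm)
      intervalIntegrable_const (.of_forall fun θ _ => (hasSum_fourierSum ha θ).mul_right _)
    · exact Continuous.aestronglyMeasurable (by fun_prop)
    · rw [norm_mul_circleExp, norm_mul_circleExp]
  simp_rw [hterm] at hsum
  exact hsum.unique (hasSum_ite_eq n _)

lemma norm_integral_le_of_norm_le_comp_abs {f : ℝ → ℂ} {g : ℝ → ℝ} {b c : ℝ} (hb : 0 ≤ b)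
    (hbc : b ≤ c) (hg : IntervalIntegrable g MeasureTheory.volume b c)
    (hfg : ∀ θ, b < |θ| → |θ| ≤ c → ‖f θ‖ ≤ g |θ|) :
    ‖∫ θ in b..c, f θ‖ ≤ ∫ θ in b..c, g θ ∧ ‖∫ θ in -c..-b, f θ‖ ≤ ∫ θ in b..c, g θ := by
  have habs {θ : ℝ} (hθ : θ ∈ Set.Ioc b c) : |θ| = θ := abs_of_pos (hb.trans_lt hθ.1)
  constructor
  · refine norm_integral_le_of_norm_le hbc (.of_forall fun θ hθ => ?_) hg
    simpa only [habs hθ] using hfg θ (by rw [habs hθ]; exact hθ.1) (by rw [habs hθ]; exact hθ.2)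
  · rw [← integral_comp_neg]
    refine norm_integral_le_of_norm_le hbc (.of_forall fun θ hθ => ?_) hg
    simpa only [abs_neg, habs hθ] using
      hfg (-θ) (by rw [abs_neg, habs hθ]; exact hθ.1) (by rw [abs_neg, habs hθ]; exact hθ.2)

lemma norm_circleExp_sub_circleExp_le (x y : ℝ) :
    ‖(Circle.exp x : ℂ) - Circle.exp y‖ ≤ |x - y| := by
  have hfactor : (Circle.exp x : ℂ) - Circle.exp y =
      (Complex.exp (Complex.I * (x - y : ℝ)) - 1) * Circle.exp y := by
    rw [sub_mul, mul_comm Complex.I, ← Circle.coe_exp, ← Circle.coe_mul, ← Circle.exp_add,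
      sub_add_cancel, one_mul]
  rw [hfactor, norm_mul_circleExp]
  exact Real.norm_exp_I_mul_ofReal_sub_one_le

lemma continuous_mul_div_sq_add_sq_sq {s : ℝ} (hs : 0 < s) :
    Continuous fun θ : ℝ => θ * (s ^ 4 / (s ^ 2 + θ ^ 2) ^ 2) := by
  have hne (θ : ℝ) : (s ^ 2 + θ ^ 2) ^ 2 ≠ 0 := by positivity
  fun_prop (disch := exact hne _)

lemma integral_mul_div_sq_add_sq_sq_le {s : ℝ} (hs : 0 < s) (b : ℝ) :
    ∫ θ in (0 : ℝ)..b, θ * (s ^ 4 / (s ^ 2 + θ ^ 2) ^ 2) ≤ s ^ 2 / 2 := by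
  have hderiv (θ : ℝ) : HasDerivAt (fun θ => -(s ^ 4 / 2) * (s ^ 2 + θ ^ 2)⁻¹)
      (θ * (s ^ 4 / (s ^ 2 + θ ^ 2) ^ 2)) θ := by
    have hne : s ^ 2 + θ ^ 2 ≠ 0 := by positivity
    refine ((((hasDerivAt_pow 2 θ).const_add (s ^ 2)).inv hne).const_mul _).congr_deriv ?_
    push_cast
    field_simp
  rw [integral_eq_sub_of_hasDerivAt (fun θ _ => hderiv θ)
    ((continuous_mul_div_sq_add_sq_sq hs).intervalIntegrable _ _)]
  have hb : 0 ≤ s ^ 4 / 2 * (s ^ 2 + b ^ 2)⁻¹ := by positivity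
  have hzero : s ^ 4 / 2 * (s ^ 2 + 0 ^ 2)⁻¹ = s ^ 2 / 2 := by field_simp; ring
  linarith

lemma le_div_sq_add_sq_sq {u A s θ : ℝ} (hs : 0 < s) (h1 : u ≤ 1) (hA : u * θ ^ 4 ≤ A * s ^ 4)
    (h0 : 0 ≤ u) : u ≤ 2 * (A + 1) * (s ^ 4 / (s ^ 2 + θ ^ 2) ^ 2) := by
  rw [← mul_div_assoc, le_div_iff₀ (by positivity)]
  calc u * (s ^ 2 + θ ^ 2) ^ 2 ≤ u * (2 * (s ^ 4 + θ ^ 4)) := by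
        gcongr
        linarith [sq_nonneg (s ^ 2 - θ ^ 2)]
    _ = 2 * (u * θ ^ 4 + u * s ^ 4) := by ring
    _ ≤ 2 * (A * s ^ 4 + 1 * s ^ 4) := by gcongr
    _ = 2 * (A + 1) * s ^ 4 := by ring

lemma norm_integral_le_of_norm_le_mul_div_sq_add_sq_sq {f : ℝ → ℂ} (hf : Continuous f)
    {D s b : ℝ} (hD : 0 ≤ D) (hs : 0 < s) (hb : 0 ≤ b)
    (hfD : ∀ θ, |θ| ≤ b → ‖f θ‖ ≤ D * (|θ| * (s ^ 4 / (s ^ 2 + |θ| ^ 2) ^ 2))) :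
    ‖∫ θ in -b..b, f θ‖ ≤ D * s ^ 2 := by
  obtain ⟨hright, hleft⟩ := norm_integral_le_of_norm_le_comp_abs le_rfl hb
    (((continuous_mul_div_sq_add_sq_sq hs).const_mul D).intervalIntegrable _ _)
    fun θ _ => hfD θ
  rw [integral_const_mul] at hright hleft
  rw [neg_zero] at hleft
  rw [← integral_add_adjacent_intervals (hf.intervalIntegrable _ 0) (hf.intervalIntegrable 0 _)]
  linarith [norm_add_le (∫ θ in -b..0, f θ) (∫ θ in (0 : ℝ)..b, f θ),
    mul_le_mul_of_nonneg_left (integral_mul_div_sq_add_sq_sq_le hs b) hD]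

lemma norm_sub_pred_le_of_norm_fourierSum_mul_pow_le (ha : Summable a) {A s : ℝ} (hA : 0 ≤ A)
    (hs : 0 < s) (hone : ∀ θ, ‖fourierSum a θ‖ ≤ 1)
    (hdecay : ∀ θ, |θ| ≤ π → ‖fourierSum a θ‖ * θ ^ 4 ≤ A * s ^ 4) (n : ℤ) :
    ‖a n - a (n - 1)‖ ≤ 2 * (A + 1) * s ^ 2 := by
  set f : ℝ → ℂ := fun θ =>
    fourierSum a θ * Circle.exp (-(n * θ)) - fourierSum a θ * Circle.exp (-((n - 1 : ℤ) * θ))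
  have hcont : Continuous f :=
    (continuous_fourierSum_mul ha n).sub (continuous_fourierSum_mul ha (n - 1))
  have hinversion : ∫ θ in -π..π, f θ = 2 * π * (a n - a (n - 1)) := by
    rw [integral_sub ((continuous_fourierSum_mul ha n).intervalIntegrable _ _)
      ((continuous_fourierSum_mul ha (n - 1)).intervalIntegrable _ _),
      integral_fourierSum_mul_circleExp ha, integral_fourierSum_mul_circleExp ha, mul_sub]
  have hbound (θ : ℝ) (hθ : |θ| ≤ π) :
      ‖f θ‖ ≤ 2 * (A + 1) * (|θ| * (s ^ 4 / (s ^ 2 + |θ| ^ 2) ^ 2)) := by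
    have hdom := le_div_sq_add_sq_sq hs (hone θ) (hdecay θ hθ) (norm_nonneg _)
    have hchar := norm_circleExp_sub_circleExp_le (-(n * θ)) (-((n - 1 : ℤ) * θ))
    have hdiff : -(n * θ) - -((n - 1 : ℤ) * θ) = -θ := by push_cast; ring
    rw [hdiff, abs_neg] at hchar
    calc ‖f θ‖ = ‖fourierSum a θ‖ *
          ‖(Circle.exp (-(n * θ)) : ℂ) - Circle.exp (-((n - 1 : ℤ) * θ))‖ := by
          rw [← norm_mul, mul_sub]
      _ ≤ 2 * (A + 1) * (s ^ 4 / (s ^ 2 + θ ^ 2) ^ 2) * |θ| :=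
        mul_le_mul hdom hchar (norm_nonneg _) ((norm_nonneg _).trans hdom)
      _ = 2 * (A + 1) * (|θ| * (s ^ 4 / (s ^ 2 + |θ| ^ 2) ^ 2)) := by rw [sq_abs]; ring
  have hnorm := norm_integral_le_of_norm_le_mul_div_sq_add_sq_sq hcont
    (by positivity : 0 ≤ 2 * (A + 1)) hs Real.pi_nonneg hbound
  rw [hinversion, norm_mul] at hnorm
  refine le_trans (le_mul_of_one_le_left (norm_nonneg _) ?_) hnorm
  rw [norm_mul, Complex.norm_real, Real.norm_of_nonneg Real.pi_nonneg, Complex.norm_ofNat]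
  linarith [Real.pi_gt_three]

lemma integral_const_mul_zpow_neg_four_le {A δ b : ℝ} (hA : 0 ≤ A) (hδ : 0 < δ) (hδb : δ ≤ b) :
    ∫ θ in δ..b, A * θ ^ (-4 : ℤ) ≤ A / (3 * δ ^ 3) := by
  have hzero : (0 : ℝ) ∉ Set.uIcc δ b := by
    rw [Set.uIcc_of_le hδb]
    exact fun h => hδ.not_ge h.1
  have hb : 0 ≤ A * (b ^ 3)⁻¹ := by have := hδ.trans_le hδb; positivity
  calc ∫ θ in δ..b, A * θ ^ (-4 : ℤ) = A * (((b ^ 3)⁻¹ - (δ ^ 3)⁻¹) / -3) := by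
        rw [integral_const_mul, integral_zpow (.inr ⟨by norm_num, hzero⟩)]
        norm_num
    _ = A / (3 * δ ^ 3) - A * (b ^ 3)⁻¹ / 3 := by field_simp; ring
    _ ≤ A / (3 * δ ^ 3) := by linarith

lemma norm_integral_tails_le {f : ℝ → ℂ} {A δ b : ℝ} (hA : 0 ≤ A) (hδ : 0 < δ) (hδb : δ ≤ b)
    (hdecay : ∀ θ, |θ| ≤ b → ‖f θ‖ * θ ^ 4 ≤ A) :
    ‖∫ θ in δ..b, f θ‖ ≤ A / (3 * δ ^ 3) ∧ ‖∫ θ in -b..-δ, f θ‖ ≤ A / (3 * δ ^ 3) := by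
  have hint : IntervalIntegrable (fun θ : ℝ => A * θ ^ (-4 : ℤ)) MeasureTheory.volume δ b := by
    refine (intervalIntegrable_zpow (.inr ?_)).const_mul A
    rw [Set.uIcc_of_le hδb]
    exact fun h => hδ.not_ge h.1
  obtain ⟨hright, hleft⟩ := norm_integral_le_of_norm_le_comp_abs hδ.le hδb hint (f := f)
    fun θ hθ hθb => by
      have hθ0 : 0 < |θ| := hδ.trans hθ
      rw [zpow_neg, ← div_eq_mul_inv, le_div_iff₀ (by positivity)]
      norm_cast
      rw [Even.pow_abs (by decide)]
      exact hdecay θ hθb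
  have hle := integral_const_mul_zpow_neg_four_le hA hδ hδb
  exact ⟨hright.trans hle, hleft.trans hle⟩

lemma half_exp_sub_le_re_mul_circleExp {w : ℂ} {μ σ ε x θ : ℝ}
    (hw : ‖w - Complex.exp (μ * θ * Complex.I - σ * θ ^ 2 / 2)‖ ≤ ε) (hx : |(μ - x) * θ| ≤ 1) :
    Real.exp (-(σ * θ ^ 2 / 2)) / 2 - ε ≤ (w * Circle.exp (-(x * θ))).re := by
  set G := Complex.exp (μ * θ * Complex.I - σ * θ ^ 2 / 2)
  have hG : (G * Circle.exp (-(x * θ))).re =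
      Real.exp (-(σ * θ ^ 2 / 2)) * Real.cos ((μ - x) * θ) := by
    have hexp : G * Circle.exp (-(x * θ)) =
        Complex.exp ((-(σ * θ ^ 2 / 2) : ℝ) + ((μ - x) * θ : ℝ) * Complex.I) := by
      rw [Circle.coe_exp, ← Complex.exp_add]
      push_cast
      ring_nf
    rw [hexp, Complex.exp_add, ← Complex.ofReal_exp, Complex.re_ofReal_mul,
      Complex.exp_ofReal_mul_I_re]
  have hcos : 1 / 2 ≤ Real.cos ((μ - x) * θ) := by
    have hsq := (sq_le_one_iff_abs_le_one _).2 hx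
    linarith [Real.one_sub_sq_div_two_le_cos (x := (μ - x) * θ)]
  have hdist : ‖w * Circle.exp (-(x * θ)) - G * Circle.exp (-(x * θ))‖ ≤ ε := by
    rwa [← sub_mul, norm_mul_circleExp]
  have hre := (abs_le.1 ((Complex.abs_re_le_norm _).trans hdist)).1
  rw [Complex.sub_re, hG] at hre
  linarith [mul_le_mul_of_nonneg_left hcos (Real.exp_nonneg (-(σ * θ ^ 2 / 2)))]

lemma mul_exp_sub_le_integral {g : ℝ → ℝ} (hg : Continuous g) {σ ε s δ : ℝ} (hσ : 0 ≤ σ)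
    (hs : 0 ≤ s) (hsδ : s ≤ δ)
    (hle : ∀ θ, |θ| ≤ δ → Real.exp (-(σ * θ ^ 2 / 2)) / 2 - ε ≤ g θ) :
    s * Real.exp (-(σ * s ^ 2 / 2)) - 2 * δ * ε ≤ ∫ θ in -δ..δ, g θ := by
  have hcont : Continuous fun θ : ℝ => Real.exp (-(σ * θ ^ 2 / 2)) / 2 := by fun_prop
  have hsmall : ∫ _ in -s..s, Real.exp (-(σ * s ^ 2 / 2)) / 2 ≤
      ∫ θ in -s..s, Real.exp (-(σ * θ ^ 2 / 2)) / 2 := by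
    refine integral_mono_on (by linarith) (continuous_const.intervalIntegrable _ _)
      (hcont.intervalIntegrable _ _) fun θ hθ => ?_
    have hθs : θ ^ 2 ≤ s ^ 2 := sq_le_sq' hθ.1 hθ.2
    gcongr
  have hmid : ∫ θ in -s..s, Real.exp (-(σ * θ ^ 2 / 2)) / 2 ≤
      ∫ θ in -δ..δ, Real.exp (-(σ * θ ^ 2 / 2)) / 2 :=
    integral_mono_interval (by linarith) (by linarith) hsδ
      (.of_forall fun θ => div_nonneg (Real.exp_nonneg _) zero_le_two)
      (hcont.intervalIntegrable _ _)
  have hlarge : ∫ θ in -δ..δ, (Real.exp (-(σ * θ ^ 2 / 2)) / 2 - ε) ≤ ∫ θ in -δ..δ, g θ :=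
    integral_mono_on (by linarith) ((hcont.sub continuous_const).intervalIntegrable _ _)
      (hg.intervalIntegrable _ _) fun θ hθ => hle θ (abs_le.2 hθ)
  rw [integral_sub (hcont.intervalIntegrable _ _) (continuous_const.intervalIntegrable _ _)]
    at hlarge
  simp only [integral_const, smul_eq_mul] at hsmall hlarge
  linarith

lemma le_re_coeff_of_fourierSum_near_gaussian (ha : Summable a) {A M μ σ s δ : ℝ} {n : ℤ}
    (hA : 0 ≤ A) (hM : 0 ≤ M) (hσ : 0 ≤ σ) (hs : 0 < s) (hsδ : s ≤ δ) (hδ : δ ≤ π)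
    (hn : |μ - n| * δ ≤ 1)
    (hgauss : ∀ θ : ℝ, ‖fourierSum a θ - Complex.exp (μ * θ * Complex.I - σ * θ ^ 2 / 2)‖ ≤
      M * |θ| ^ 3)
    (hdecay : ∀ θ, |θ| ≤ π → ‖fourierSum a θ‖ * θ ^ 4 ≤ A) :
    s * Real.exp (-(σ * s ^ 2 / 2)) - 2 * M * δ ^ 4 - 2 * (A / (3 * δ ^ 3)) ≤
      2 * π * (a n).re := by
  have hcont := continuous_fourierSum_mul ha n
  have hint (b c : ℝ) := hcont.intervalIntegrable b c (μ := MeasureTheory.volume)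
  have hcentre : s * Real.exp (-(σ * s ^ 2 / 2)) - 2 * δ * (M * δ ^ 3) ≤
      (∫ θ in -δ..δ, fourierSum a θ * Circle.exp (-(n * θ))).re := by
    refine (mul_exp_sub_le_integral (Complex.continuous_re.comp hcont) hσ hs.le hsδ
      fun θ hθ => ?_).trans_eq (Complex.reCLM.intervalIntegral_comp_comm (hint _ _))
    refine half_exp_sub_le_re_mul_circleExp ((hgauss θ).trans (by gcongr)) ?_
    rw [abs_mul]
    exact le_trans (by gcongr) hn
  obtain ⟨hright, hleft⟩ := norm_integral_tails_le hA (hs.trans_le hsδ) hδ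
    (f := fun θ => fourierSum a θ * Circle.exp (-(n * θ)))
    (by simpa only [norm_mul_circleExp] using hdecay)
  have hinversion := congrArg Complex.re (integral_fourierSum_mul_circleExp ha n)
  rw [← integral_add_adjacent_intervals (hint (-π) (-δ)) (hint (-δ) π),
    ← integral_add_adjacent_intervals (hint (-δ) δ) (hint δ π), Complex.add_re, Complex.add_re,
    ← Complex.ofReal_ofNat, ← Complex.ofReal_mul, Complex.re_ofReal_mul] at hinversion
  have hright_re := (abs_le.1 ((Complex.abs_re_le_norm _).trans hright)).1
  have hleft_re := (abs_le.1 ((Complex.abs_re_le_norm _).trans hleft)).1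
  linarith

end FourierSeries

noncomputable section CompoundPoisson

variable {ι : Type*} {a k : ι → ℝ} {θ : ℝ}

/-- The Lévy exponent at `θ` of the compound Poisson law whose jump `k i` has rate `a i`; the
characteristic function of the law is the exponential of it. -/
def levyExponent (a k : ι → ℝ) (θ : ℝ) : ℂ := ∑' i, (a i : ℂ) * (Circle.exp (k i * θ) - 1)

lemma summable_mul_circleExp (ha : Summable a) (k : ι → ℝ) (θ : ℝ) :
    Summable fun i => (a i : ℂ) * Circle.exp (k i * θ) :=
  .of_norm (by simpa only [norm_mul_circleExp, Complex.norm_real] using ha.norm)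

lemma levyExponent_eq_sub (ha : Summable a) (k : ι → ℝ) (θ : ℝ) :
    levyExponent a k θ = ∑' i, (a i : ℂ) * Circle.exp (k i * θ) - ∑' i, (a i : ℂ) := by
  simp_rw [levyExponent, mul_sub, mul_one]
  exact (summable_mul_circleExp ha k θ).tsum_sub (Complex.summable_ofReal.2 ha)

lemma hasSum_levyExponent (ha : Summable a) (k : ι → ℝ) (θ : ℝ) :
    HasSum (fun i => (a i : ℂ) * (Circle.exp (k i * θ) - 1)) (levyExponent a k θ) := by
  refine Summable.hasSum ?_
  simp_rw [mul_sub, mul_one]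
  exact (summable_mul_circleExp ha k θ).sub (Complex.summable_ofReal.2 ha)

lemma hasSum_mul_one_sub_cos (ha : Summable a) (k : ι → ℝ) (θ : ℝ) :
    HasSum (fun i => a i * (1 - Real.cos (k i * θ))) (-(levyExponent a k θ).re) := by
  refine (Complex.hasSum_re (hasSum_levyExponent ha k θ)).neg.congr_fun fun i => ?_
  rw [Complex.re_ofReal_mul, Complex.sub_re, Circle.coe_exp, Complex.exp_ofReal_mul_I_re,
    Complex.one_re]
  ring

lemma re_levyExponent_le_of_injective (ha : Summable a) (ha0 : ∀ i, 0 ≤ a i) {κ : Type*}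
    {r : κ → ι} (hr : Function.Injective r) {E : ℝ}
    (hE : HasSum (fun j => a (r j) * (1 - Real.cos (k (r j) * θ))) E) :
    (levyExponent a k θ).re ≤ -E := by
  have hsum := hasSum_mul_one_sub_cos ha k θ
  have hle := tsum_comp_le_tsum_of_inj hsum.summable
    (fun i => mul_nonneg (ha0 i) (sub_nonneg.2 (Real.cos_le_one _))) hr
  rw [hsum.tsum_eq] at hle
  linarith [hE.tsum_eq.symm.trans_le hle]

lemma re_levyExponent_nonpos (ha : Summable a) (ha0 : ∀ i, 0 ≤ a i) :
    (levyExponent a k θ).re ≤ 0 :=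
  neg_nonneg.1 ((hasSum_mul_one_sub_cos ha k θ).nonneg fun i =>
    mul_nonneg (ha0 i) (sub_nonneg.2 (Real.cos_le_one _)))

lemma norm_exp_sub_exp_le {z w : ℂ} (hz : z.re ≤ 0) (hw : w.re ≤ 0) :
    ‖Complex.exp z - Complex.exp w‖ ≤ ‖z - w‖ := by
  have hderiv : ∀ u ∈ {u : ℂ | u.re ≤ 0}, ‖deriv Complex.exp u‖ ≤ 1 := fun u hu => by
    rwa [Complex.deriv_exp, Complex.norm_exp, Real.exp_le_one_iff]
  simpa only [one_mul] using Convex.norm_image_sub_le_of_norm_deriv_le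
    (fun u _ => Complex.differentiableAt_exp) hderiv (convex_halfSpace_re_le 0) hw hz

lemma norm_circleExp_sub_quadratic_le (y : ℝ) :
    ‖(Circle.exp y : ℂ) - 1 - y * Complex.I + y ^ 2 / 2‖ ≤ 4 * |y| ^ 3 := by
  rw [Circle.coe_exp]
  have hnorm : ‖(y : ℂ) * Complex.I‖ = |y| := by simp
  rcases le_total |y| 1 with h | h
  · have hbound := Complex.exp_bound (x := y * Complex.I) (by rwa [hnorm]) (n := 3) (by norm_num)
    have htaylor : Complex.exp (y * Complex.I) - 1 - y * Complex.I + y ^ 2 / 2 =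
        Complex.exp (y * Complex.I) -
          ∑ m ∈ Finset.range 3, (y * Complex.I) ^ m / (m.factorial : ℂ) := by
      simp only [Finset.sum_range_succ, Finset.sum_range_zero, mul_pow, Complex.I_sq]
      norm_num
      ring
    rw [htaylor]
    refine hbound.trans ?_
    rw [hnorm, mul_comm]
    gcongr
    norm_num [Nat.factorial]
  · calc ‖Complex.exp (y * Complex.I) - 1 - y * Complex.I + y ^ 2 / 2‖
        ≤ ‖Complex.exp (y * Complex.I)‖ + ‖(1 : ℂ)‖ + ‖(y : ℂ) * Complex.I‖ +
          ‖(y : ℂ) ^ 2 / 2‖ :=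
          (norm_add_le _ _).trans (add_le_add_left ((norm_sub_le _ _).trans
            (add_le_add_left (norm_sub_le _ _) _)) _)
      _ = 1 + 1 + |y| + |y| ^ 2 / 2 := by
          rw [Complex.norm_exp_ofReal_mul_I, hnorm]
          simp
      _ ≤ 4 * |y| ^ 3 := by
          have hsq : |y| ≤ |y| ^ 2 := le_self_pow₀ h two_ne_zero
          have hcube : |y| ^ 2 ≤ |y| ^ 3 := pow_le_pow_right₀ h (by norm_num)
          linarith

lemma norm_exp_levyExponent_sub_gaussian_le (ha : Summable a) (ha0 : ∀ i, 0 ≤ a i)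
    {m₁ m₂ m₃ : ℝ} (h₁ : HasSum (fun i => k i * a i) m₁)
    (h₂ : HasSum (fun i => k i ^ 2 * a i) m₂) (h₃ : HasSum (fun i => |k i| ^ 3 * a i) m₃) (θ : ℝ) :
    ‖Complex.exp (levyExponent a k θ) -
      Complex.exp (m₁ * θ * Complex.I - m₂ * θ ^ 2 / 2)‖ ≤ 4 * m₃ * |θ| ^ 3 := by
  have hre : ((m₁ * θ * Complex.I - m₂ * θ ^ 2 / 2 : ℂ)).re ≤ 0 := by
    have hm₂ : 0 ≤ m₂ := h₂.nonneg fun i => mul_nonneg (sq_nonneg _) (ha0 i)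
    have hreal : (m₁ * θ * Complex.I - m₂ * θ ^ 2 / 2 : ℂ) =
        ((m₁ * θ : ℝ) : ℂ) * Complex.I - ((m₂ * θ ^ 2 / 2 : ℝ) : ℂ) := by push_cast; ring
    rw [hreal, Complex.sub_re, Complex.re_ofReal_mul, Complex.I_re, Complex.ofReal_re]
    have : 0 ≤ m₂ * θ ^ 2 / 2 := by positivity
    linarith
  refine (norm_exp_sub_exp_le (re_levyExponent_nonpos ha ha0) hre).trans ?_
  have hdiff := (hasSum_levyExponent ha k θ).sub
    (((Complex.hasSum_ofReal.2 h₁).mul_right (θ * Complex.I)).sub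
      ((Complex.hasSum_ofReal.2 h₂).mul_right (θ ^ 2 / 2 : ℂ)))
  rw [← mul_assoc, ← mul_div_assoc] at hdiff
  have hmajorant : HasSum (fun i => a i * (4 * |k i * θ| ^ 3)) (4 * m₃ * |θ| ^ 3) := by
    refine ((h₃.mul_left 4).mul_right (|θ| ^ 3)).congr_fun fun i => ?_
    rw [abs_mul, mul_pow]
    ring
  rw [← hdiff.tsum_eq]
  refine tsum_of_norm_bounded hmajorant fun i => ?_
  have hterm : (a i : ℂ) * (Circle.exp (k i * θ) - 1) -
      (((k i * a i : ℝ) : ℂ) * (θ * Complex.I) - ((k i ^ 2 * a i : ℝ) : ℂ) * (θ ^ 2 / 2)) =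
      a i * (Circle.exp (k i * θ) - 1 - (k i * θ : ℝ) * Complex.I + (k i * θ : ℝ) ^ 2 / 2) := by
    push_cast
    ring
  rw [hterm, norm_mul, Complex.norm_real, Real.norm_of_nonneg (ha0 i)]
  exact mul_le_mul_of_nonneg_left (norm_circleExp_sub_quadratic_le _) (ha0 i)

end CompoundPoisson

noncomputable section TiltedLaw

variable {t : ℝ}

/-- The mass at `n` of the probability law on `ℤ` obtained by weighting each partition of `n`
with `exp (-n t)`. -/
def tiltedMass (t : ℝ) (n : ℤ) : ℝ :=
  partitionCount n * Real.exp (-(n * t)) / partitionGenFun (Real.exp (-t))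

/-- The characteristic function of the law with masses `tiltedMass t`. -/
def tiltedCharFun (t θ : ℝ) : ℂ := fourierSum (fun n => tiltedMass t n) θ

lemma summable_partitionCount_mul_exp (ht : 0 < t) :
    Summable fun n : ℕ => (partitionCount n : ℝ) * Real.exp (-t) ^ n :=
  summable_partitionCount_mul_pow (Real.exp_nonneg _) (Real.exp_lt_one_iff.2 (neg_lt_zero.2 ht))

lemma partitionGenFun_exp_pos (ht : 0 < t) : 0 < partitionGenFun (Real.exp (-t)) := by
  refine (summable_partitionCount_mul_exp ht).tsum_pos (fun n => by positivity) 0 ?_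
  have hpos : 0 < partitionCount (0 : ℕ) := by
    rw [partitionCount, if_pos (by simp)]
    exact Fintype.card_pos
  positivity

lemma tiltedMass_natCast (t : ℝ) (n : ℕ) : tiltedMass t n =
    partitionCount n * Real.exp (-t) ^ n / partitionGenFun (Real.exp (-t)) := by
  rw [tiltedMass, ← Real.exp_nat_mul, mul_neg, Int.cast_natCast]

lemma tiltedMass_eq_zero {n : ℤ} (hn : n ∉ Set.range ((↑) : ℕ → ℤ)) : tiltedMass t n = 0 := by
  have hneg : ¬ 0 ≤ n := fun h => hn ⟨n.toNat, Int.toNat_of_nonneg h⟩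
  rw [tiltedMass, partitionCount, if_neg hneg, Nat.cast_zero, zero_mul, zero_div]

lemma summable_tiltedMass (ht : 0 < t) : Summable fun n => (tiltedMass t n : ℂ) := by
  refine Complex.summable_ofReal.2 ((Nat.cast_injective.summable_iff fun n hn =>
    tiltedMass_eq_zero hn).1 ?_)
  simpa only [Function.comp_def, tiltedMass_natCast] using
    (summable_partitionCount_mul_exp ht).div_const _

lemma partitionGenFun_mul_circleExp_eq_exp (ht : 0 < t) (θ : ℝ) :
    partitionGenFun ((Real.exp (-t) : ℂ) * Circle.exp θ) =
      Complex.exp (∑' x, (jumpRate t x : ℂ) * Circle.exp (jumpSize x * θ)) := by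
  refine partitionGenFun_eq_exp ?_ ((summable_mul_circleExp (summable_jumpRate ht)
    (fun x => (jumpSize x : ℝ)) θ).hasSum.congr_fun fun x => ?_)
  · rw [norm_mul_circleExp, Complex.norm_real, Real.norm_of_nonneg (Real.exp_nonneg _)]
    exact Real.exp_lt_one_iff.2 (neg_lt_zero.2 ht)
  · rw [jumpRate, mul_pow, ← Complex.ofReal_pow, ← Real.exp_nat_mul, mul_neg,
      Circle.exp_natCast_mul]
    push_cast
    ring

lemma tiltedCharFun_eq_exp (ht : 0 < t) (θ : ℝ) : tiltedCharFun t θ =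
    Complex.exp (levyExponent (jumpRate t) (fun x => jumpSize x) θ) := by
  have hzero : ((partitionGenFun (Real.exp (-t)) : ℝ) : ℂ) =
      Complex.exp (∑' x, (jumpRate t x : ℂ)) := by
    simpa [partitionGenFun, Complex.ofReal_tsum] using partitionGenFun_mul_circleExp_eq_exp ht 0
  have hratio : tiltedCharFun t θ =
      partitionGenFun ((Real.exp (-t) : ℂ) * Circle.exp θ) / partitionGenFun (Real.exp (-t)) := by
    rw [tiltedCharFun, fourierSum, ← Nat.cast_injective.tsum_eq, partitionGenFun, ← tsum_div_const]
    · refine tsum_congr fun n => ?_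
      rw [tiltedMass_natCast, mul_pow, Int.cast_natCast, Circle.exp_natCast_mul]
      push_cast
      ring
    · refine Function.support_subset_iff'.2 fun n hn => ?_
      rw [tiltedMass_eq_zero hn, Complex.ofReal_zero, zero_mul]
  rw [hratio, partitionGenFun_mul_circleExp_eq_exp ht, hzero, ← Complex.exp_sub,
    levyExponent_eq_sub (summable_jumpRate ht)]

end TiltedLaw

noncomputable section Decay

variable {t x θ : ℝ}

/-- The sum `∑ k, x ^ k * (1 - cos (k * θ))` in closed form, see `hasSum_pow_mul_one_sub_cos`. -/
def geometricCosDefect (x θ : ℝ) : ℝ :=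
  x * (1 + x) * (1 - cos θ) / ((1 - x) * ((1 - x) ^ 2 + 2 * x * (1 - cos θ)))

lemma hasSum_pow_mul_cos (hx : |x| < 1) (θ : ℝ) : HasSum (fun k : ℕ => x ^ k * cos (k * θ))
    ((1 - x * cos θ) / (1 - 2 * x * cos θ + x ^ 2)) := by
  have hnorm : ‖(x : ℂ) * Circle.exp θ‖ < 1 := by
    rwa [norm_mul_circleExp, Complex.norm_real]
  convert! (Complex.hasSum_re (hasSum_geometric_of_norm_lt_one hnorm)) using 1
  · funext k
    rw [mul_pow, ← Circle.coe_pow, ← Circle.exp_natCast_mul, ← Complex.ofReal_pow,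
      Complex.re_ofReal_mul, Circle.coe_exp, Complex.exp_ofReal_mul_I_re]
  · have hre : (1 - (x : ℂ) * Circle.exp θ).re = 1 - x * cos θ := by
      rw [Complex.sub_re, Complex.re_ofReal_mul, Circle.coe_exp, Complex.exp_ofReal_mul_I_re,
        Complex.one_re]
    have him : (1 - (x : ℂ) * Circle.exp θ).im = -(x * sin θ) := by
      rw [Complex.sub_im, Complex.im_ofReal_mul, Circle.coe_exp, Complex.exp_ofReal_mul_I_im,
        Complex.one_im, zero_sub]
    rw [Complex.inv_re, Complex.normSq_apply, hre, him]
    congr 1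
    linear_combination -x ^ 2 * sin_sq_add_cos_sq θ

lemma hasSum_pow_mul_one_sub_cos (hx₀ : 0 ≤ x) (hx₁ : x < 1) (θ : ℝ) :
    HasSum (fun k : ℕ => x ^ k * (1 - cos (k * θ))) (geometricCosDefect x θ) := by
  have h1x : 0 < 1 - x := sub_pos.2 hx₁
  have hdefect : 0 ≤ x * (1 - cos θ) := mul_nonneg hx₀ (sub_nonneg.2 (cos_le_one θ))
  have hden : 1 - 2 * x * cos θ + x ^ 2 = (1 - x) ^ 2 + 2 * x * (1 - cos θ) := by ring
  have : 0 < (1 - x) ^ 2 + 2 * x * (1 - cos θ) := by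
    linarith [pow_pos h1x 2]
  convert! (hasSum_geometric_of_lt_one hx₀ hx₁).sub
    (hasSum_pow_mul_cos (abs_lt.2 ⟨by linarith, hx₁⟩) θ) using 1
  · funext k
    ring
  · rw [geometricCosDefect, hden]
    field_simp
    ring

lemma sq_div_five_le_one_sub_cos (hθ : |θ| ≤ π) : θ ^ 2 / 5 ≤ 1 - cos θ := by
  have hπ : (1 : ℝ) / 5 ≤ 2 / π ^ 2 := by
    rw [div_le_div_iff₀ (by norm_num) (by positivity)]
    nlinarith [pi_lt_d2, pi_pos]
  nlinarith [cos_le_one_sub_mul_cos_sq hθ, sq_nonneg θ]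

lemma one_third_le_exp_neg (ht₁ : t ≤ 1) : 1 / 3 ≤ exp (-t) := by
  rw [one_div, exp_neg]
  exact inv_anti₀ (exp_pos t) ((exp_le_exp.2 ht₁).trans (by linarith [exp_one_lt_d9]))

lemma div_le_geometricCosDefect (ht : 0 < t) (ht₁ : t ≤ 1) (hθ : |θ| ≤ π) :
    θ ^ 2 / (15 * t * (t ^ 2 + θ ^ 2)) ≤ geometricCosDefect (exp (-t)) θ := by
  rw [geometricCosDefect]
  have hdefect := sq_div_five_le_one_sub_cos hθ
  have hx₀ := one_third_le_exp_neg ht₁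
  have hx₁ : exp (-t) < 1 := exp_lt_one_iff.2 (neg_lt_zero.2 ht)
  have hxt : 1 - exp (-t) ≤ t := by linarith [add_one_le_exp (-t)]
  set x := exp (-t)
  set v := 1 - cos θ
  have hv₀ : 0 ≤ v := le_trans (by positivity) hdefect
  have : 0 < 1 - x := sub_pos.2 hx₁
  calc θ ^ 2 / (15 * t * (t ^ 2 + θ ^ 2))
      = 1 / 3 * (θ ^ 2 / 5) / (t * (t ^ 2 + θ ^ 2)) := by field_simp; ring
    _ ≤ 1 / 3 * v / (t * (t ^ 2 + 2 * v)) := by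
      -- `y / (t² + y)` is increasing in `y`
      rw [div_le_div_iff₀ (by positivity) (by positivity)]
      have hcross : θ ^ 2 / 5 * (t ^ 2 + 2 * v) ≤ v * (t ^ 2 + θ ^ 2) := by
        nlinarith [mul_nonneg hv₀ (sq_nonneg θ), mul_le_mul_of_nonneg_right hdefect (sq_nonneg t)]
      linarith [mul_le_mul_of_nonneg_left hcross ht.le]
    _ ≤ x * (1 + x) * v / ((1 - x) * ((1 - x) ^ 2 + 2 * x * v)) := by
      gcongr
      · nlinarith
      · linarith

lemma exp_neg_mul_pow_le_factorial {y E : ℝ} (hy : 0 ≤ y) (hyE : y ≤ E) (p : ℕ) :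
    exp (-E) * y ^ p ≤ p.factorial := by
  have hpow := pow_div_factorial_le_exp y hy p
  rw [div_le_iff₀ (by positivity)] at hpow
  calc exp (-E) * y ^ p ≤ exp (-y) * (exp y * p.factorial) := by gcongr
    _ = p.factorial := by rw [← mul_assoc, ← exp_add, neg_add_cancel, exp_zero, one_mul]

/-- The constant in the decay bound `norm_tiltedCharFun_mul_pow_le`: the product of `6! = 720`,
of `100 ≥ π ^ 4` and of `30 ^ 6`. -/
def decayConst : ℝ := 720 * 100 * 30 ^ 6

lemma decayConst_pos : 0 < decayConst := by norm_num [decayConst]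

lemma exp_neg_mul_pow_four_le {E : ℝ} (ht : 0 < t) (hθ : |θ| ≤ π)
    (hE : θ ^ 2 / (15 * t * (t ^ 2 + θ ^ 2)) ≤ E) :
    exp (-E) * θ ^ 4 ≤ decayConst * t ^ 6 := by
  rcases le_total (θ ^ 2) (t ^ 2) with hle | hle
  · have hexp : exp (-E) * (θ ^ 2 / (30 * t ^ 3)) ^ 2 ≤ (2).factorial := by
      refine exp_neg_mul_pow_le_factorial (by positivity) (le_trans ?_ hE) 2
      refine div_le_div_of_nonneg_left (sq_nonneg θ) (by positivity) ?_
      nlinarith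
    calc exp (-E) * θ ^ 4 = exp (-E) * (θ ^ 2 / (30 * t ^ 3)) ^ 2 * (30 ^ 2 * t ^ 6) := by
          field_simp
      _ ≤ (2).factorial * (30 ^ 2 * t ^ 6) := by gcongr
      _ ≤ decayConst * t ^ 6 := by
          rw [← mul_assoc]
          gcongr
          norm_num [decayConst, Nat.factorial]
  · have hexp : exp (-E) * (1 / (30 * t)) ^ 6 ≤ (6).factorial := by
      refine exp_neg_mul_pow_le_factorial (by positivity) (le_trans ?_ hE) 6
      have hθ₀ : 0 < θ ^ 2 := lt_of_lt_of_le (by positivity) hle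
      rw [div_le_div_iff₀ (by positivity) (by positivity)]
      nlinarith
    have hθ₄ : θ ^ 4 ≤ 100 := by
      have hθπ : θ ^ 2 ≤ π ^ 2 := sq_le_sq' (abs_le.1 hθ).1 (abs_le.1 hθ).2
      have hπ : π ^ 2 ≤ 10 := by nlinarith [pi_lt_d2, pi_pos]
      nlinarith [sq_nonneg θ]
    calc exp (-E) * θ ^ 4 ≤ exp (-E) * 100 := by gcongr
      _ = exp (-E) * (1 / (30 * t)) ^ 6 * (100 * 30 ^ 6 * t ^ 6) := by field_simp
      _ ≤ (6).factorial * (100 * 30 ^ 6 * t ^ 6) := by gcongr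
      _ = decayConst * t ^ 6 := by
          norm_num [decayConst, Nat.factorial]
          ring

lemma norm_tiltedCharFun_le_one (ht : 0 < t) (θ : ℝ) : ‖tiltedCharFun t θ‖ ≤ 1 := by
  rw [tiltedCharFun_eq_exp ht, Complex.norm_exp, exp_le_one_iff]
  exact re_levyExponent_nonpos (summable_jumpRate ht) (jumpRate_nonneg t)

-- Among all jumps, those with `m = 1`, whose rates are geometric, already give the decay.
lemma norm_tiltedCharFun_le_exp (ht : 0 < t) (θ : ℝ) :
    ‖tiltedCharFun t θ‖ ≤ exp (-geometricCosDefect (exp (-t)) θ) := by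
  rw [tiltedCharFun_eq_exp ht, Complex.norm_exp, exp_le_exp]
  refine re_levyExponent_le_of_injective (r := fun k : ℕ => (1, k)) (summable_jumpRate ht)
    (jumpRate_nonneg t) (fun k l hkl => (Prod.ext_iff.1 hkl).2) ?_
  have hsum := hasSum_pow_mul_one_sub_cos (exp_nonneg (-t))
    (exp_lt_one_iff.2 (neg_lt_zero.2 ht)) θ
  rw [← hasSum_nat_add_iff' 1, Finset.sum_range_one, Nat.cast_zero, zero_mul, cos_zero, sub_self,
    mul_zero, sub_zero] at hsum
  refine hsum.congr_fun fun k => ?_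
  rw [jumpRate_eq_mul_pow, jumpSize]
  push_cast
  ring_nf

lemma norm_tiltedCharFun_mul_pow_le (ht : 0 < t) (ht₁ : t ≤ 1) (hθ : |θ| ≤ π) :
    ‖tiltedCharFun t θ‖ * θ ^ 4 ≤ decayConst * t ^ 6 :=
  (mul_le_mul_of_nonneg_right (norm_tiltedCharFun_le_exp ht θ) (by positivity)).trans
    (exp_neg_mul_pow_four_le ht hθ (div_le_geometricCosDefect ht ht₁ hθ))

end Decay

noncomputable section MassEstimates

variable {t : ℝ}

/-- The order of magnitude `t ^ (3 / 2)` of the masses `tiltedMass t n` for `n` near the mean: the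
inverse of the standard deviation. -/
def massScale (t : ℝ) : ℝ := t * √t

lemma massScale_pos (ht : 0 < t) : 0 < massScale t := mul_pos ht (sqrt_pos.2 ht)

lemma massScale_sq (ht : 0 ≤ t) : massScale t ^ 2 = t ^ 3 := by
  rw [massScale, mul_pow, sq_sqrt ht]
  ring

lemma massScale_pow_four (ht : 0 ≤ t) : massScale t ^ 4 = t ^ 6 := by
  linear_combination (massScale t ^ 2 + t ^ 3) * massScale_sq ht

lemma massScale_mul_sqrt (ht : 0 ≤ t) : massScale t * √t = t ^ 2 := by
  rw [massScale, mul_assoc, mul_self_sqrt ht, sq]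

lemma abs_tiltedMass_sub_pred_le (ht : 0 < t) (ht₁ : t ≤ 1) (n : ℤ) :
    |tiltedMass t n - tiltedMass t (n - 1)| ≤ 2 * (decayConst + 1) * t ^ 3 := by
  have hdecay : ∀ θ : ℝ, |θ| ≤ π → ‖tiltedCharFun t θ‖ * θ ^ 4 ≤ decayConst * massScale t ^ 4 :=
    fun θ hθ => massScale_pow_four ht.le ▸ norm_tiltedCharFun_mul_pow_le ht ht₁ hθ
  have hbound := norm_sub_pred_le_of_norm_fourierSum_mul_pow_le (summable_tiltedMass ht)
    decayConst_pos.le (massScale_pos ht) (norm_tiltedCharFun_le_one ht) hdecay n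
  rwa [massScale_sq ht.le, ← Complex.ofReal_sub, Complex.norm_real] at hbound

lemma norm_tiltedCharFun_sub_gaussian_le (ht : 0 < t) (θ : ℝ) :
    ‖tiltedCharFun t θ - Complex.exp (jumpMoment 1 t * θ * Complex.I - jumpMoment 2 t * θ ^ 2 / 2)‖
      ≤ 4 * jumpMoment 3 t * |θ| ^ 3 := by
  have hmoment (p : ℕ) : HasSum (fun x => (jumpSize x : ℝ) ^ p * jumpRate t x) (jumpMoment p t) :=
    (summable_pow_mul_jumpRate ht p).hasSum
  rw [tiltedCharFun_eq_exp ht]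
  exact norm_exp_levyExponent_sub_gaussian_le (summable_jumpRate ht) (jumpRate_nonneg t)
    (by simpa only [pow_one] using hmoment 1) (hmoment 2)
    (by simpa only [Nat.abs_cast] using hmoment 3) θ

lemma jumpMoment_two_mul_le (ht : 0 < t) : jumpMoment 2 t * t ^ 3 ≤ 8 * π ^ 2 / 3 := by
  rw [← le_div_iff₀ (by positivity)]
  refine (jumpMoment_le ht 2).trans_eq ?_
  norm_num [Nat.factorial]
  ring

lemma jumpMoment_three_mul_le (ht : 0 < t) : jumpMoment 3 t * t ^ 4 ≤ 16 * π ^ 2 := by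
  rw [← le_div_iff₀ (by positivity)]
  refine (jumpMoment_le ht 3).trans_eq ?_
  norm_num [Nat.factorial]
  ring

lemma exp_le_exp_neg_jumpMoment_two (ht : 0 < t) :
    exp (-(4 * π ^ 2 / 3)) ≤ exp (-(jumpMoment 2 t * massScale t ^ 2 / 2)) := by
  rw [massScale_sq ht.le]
  exact exp_le_exp.2 (by linarith [jumpMoment_two_mul_le ht])

lemma le_two_pi_mul_tiltedMass (ht : 0 < t) (ht₁ : t ≤ 1) {K : ℝ} (hK : 1 ≤ K)
    (hKπ : K * massScale t ≤ π) {n : ℤ} (hn : |jumpMoment 1 t - n| * (K * massScale t) ≤ 1) :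
    massScale t * (exp (-(4 * π ^ 2 / 3)) - 128 * π ^ 2 * K ^ 4 * √t -
      2 * decayConst / (3 * K ^ 3)) ≤ 2 * π * tiltedMass t n := by
  have hs := massScale_pos ht
  have : 0 < K := one_pos.trans_le hK
  have hlocal := le_re_coeff_of_fourierSum_near_gaussian (summable_tiltedMass ht)
    (mul_nonneg decayConst_pos.le (by positivity))
    (mul_nonneg zero_le_four (jumpMoment_nonneg 3 t)) (jumpMoment_nonneg 2 t) hs
    (le_mul_of_one_le_left hs.le hK) hKπ hn (norm_tiltedCharFun_sub_gaussian_le ht)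
    (fun θ hθ => norm_tiltedCharFun_mul_pow_le ht ht₁ hθ)
  have hmain := mul_le_mul_of_nonneg_left (exp_le_exp_neg_jumpMoment_two ht) hs.le
  have hcubic : 2 * (4 * jumpMoment 3 t) * (K * massScale t) ^ 4 ≤
      massScale t * (128 * π ^ 2 * K ^ 4 * √t) :=
    calc 2 * (4 * jumpMoment 3 t) * (K * massScale t) ^ 4
        = 8 * K ^ 4 * t ^ 2 * (jumpMoment 3 t * t ^ 4) := by
          rw [mul_pow, massScale_pow_four ht.le]
          ring
      _ ≤ 8 * K ^ 4 * t ^ 2 * (16 * π ^ 2) := by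
          exact mul_le_mul_of_nonneg_left (jumpMoment_three_mul_le ht) (by positivity)
      _ = massScale t * (128 * π ^ 2 * K ^ 4 * √t) := by
          rw [← massScale_mul_sqrt ht.le]
          ring
  have htail : 2 * (decayConst * t ^ 6 / (3 * (K * massScale t) ^ 3)) =
      massScale t * (2 * decayConst / (3 * K ^ 3)) := by
    rw [← massScale_pow_four ht.le]
    field_simp
  rw [Complex.ofReal_re] at hlocal
  linarith

lemma abs_jumpMoment_one_sub_mul_massScale_le (ht : 0 < t) {μ : ℝ} (hμ : μ = π ^ 2 / (6 * t ^ 2)) :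
    |jumpMoment 1 t - μ| * massScale t ≤
      (∑' m : ℕ, (m : ℝ) ^ (-(5 / 4) : ℝ)) * t ^ (1 / 4 : ℝ) := by
  have hscale : massScale t = t ^ (3 / 2 : ℝ) := by
    rw [massScale, sqrt_eq_rpow, ← rpow_one_add' ht.le (by norm_num)]
    norm_num
  calc |jumpMoment 1 t - μ| * massScale t
      ≤ (∑' m : ℕ, (m : ℝ) ^ (-(5 / 4) : ℝ)) * t ^ (-(5 / 4) : ℝ) * massScale t := by
        rw [hμ, abs_sub_comm]
        exact mul_le_mul_of_nonneg_right (abs_sub_jumpMoment_one_le ht) (massScale_pos ht).le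
    _ = (∑' m : ℕ, (m : ℝ) ^ (-(5 / 4) : ℝ)) * t ^ (1 / 4 : ℝ) := by
        rw [hscale, mul_assoc, ← rpow_add ht]
        norm_num

open Filter Topology

lemma eventually_nhdsGT_zero_le {f : ℝ → ℝ} {b : ℝ} (hf : ContinuousAt f 0) (h₀ : f 0 < b) :
    ∀ᶠ t in 𝓝[>] 0, f t ≤ b :=
  ((hf.eventually_lt_const h₀).filter_mono nhdsWithin_le_nhds).mono fun _ h => h.le

lemma exists_one_le_tail_le {A c : ℝ} (hA : 0 ≤ A) (hc : 0 < c) :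
    ∃ K ≥ 1, 2 * A / (3 * K ^ 3) ≤ c := by
  have hK : 1 ≤ 1 + A / c := le_add_of_nonneg_right (by positivity)
  refine ⟨1 + A / c, hK, ?_⟩
  rw [div_le_iff₀ (by positivity)]
  have hlin : A ≤ c * (1 + A / c) := by
    rw [mul_add, mul_div_cancel₀ _ hc.ne']
    linarith
  have hcube := mul_le_mul_of_nonneg_left (le_self_pow₀ hK three_ne_zero) hc.le
  linarith

theorem exists_eventually_mul_massScale_le_tiltedMass :
    ∃ c > 0, ∀ᶠ t in 𝓝[>] 0, ∀ n : ℕ, (n : ℝ) = π ^ 2 / (6 * t ^ 2) →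
      c * massScale t ≤ tiltedMass t n := by
  set c₀ := exp (-(4 * π ^ 2 / 3))
  have hc₀ : 0 < c₀ := exp_pos _
  obtain ⟨K, hK, htail⟩ := exists_one_le_tail_le decayConst_pos.le
    (show 0 < c₀ / 4 by positivity)
  have hcubic : ∀ᶠ t in 𝓝[>] 0, 128 * π ^ 2 * K ^ 4 * √t ≤ c₀ / 4 :=
    eventually_nhdsGT_zero_le (by fun_prop) (by simpa using hc₀)
  have hKπ : ∀ᶠ t in 𝓝[>] 0, K * massScale t ≤ π :=
    eventually_nhdsGT_zero_le (by unfold massScale; fun_prop) (by simpa [massScale] using pi_pos)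
  have hmean : ∀ᶠ t in 𝓝[>] 0,
      (∑' m : ℕ, (m : ℝ) ^ (-(5 / 4) : ℝ)) * t ^ (1 / 4 : ℝ) * K ≤ 1 :=
    eventually_nhdsGT_zero_le
      ((continuousAt_const.mul (continuousAt_rpow_const 0 _ (Or.inr (by norm_num)))).mul
        continuousAt_const) (by norm_num)
  have hsmall : ∀ᶠ t : ℝ in 𝓝[>] 0, t ≤ 1 := eventually_nhdsGT_zero_le continuousAt_id one_pos
  refine ⟨c₀ / (4 * π), by positivity, ?_⟩
  filter_upwards [eventually_mem_nhdsWithin, hsmall, hcubic, hKπ, hmean]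
    with t (ht : 0 < t) ht₁ hcubic hKπ hmean n hn
  have hnear : |jumpMoment 1 t - (n : ℤ)| * (K * massScale t) ≤ 1 := by
    refine le_trans ?_ hmean
    rw [mul_comm K, ← mul_assoc, Int.cast_natCast]
    exact mul_le_mul_of_nonneg_right (abs_jumpMoment_one_sub_mul_massScale_le ht hn) (by linarith)
  calc c₀ / (4 * π) * massScale t = massScale t * (c₀ - c₀ / 4 - c₀ / 4) / (2 * π) := by
        field_simp
        ring
    _ ≤ massScale t * (c₀ - 128 * π ^ 2 * K ^ 4 * √t - 2 * decayConst / (3 * K ^ 3)) /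
          (2 * π) := by
        have := massScale_pos ht
        gcongr
    _ ≤ tiltedMass t n := by
        rw [div_le_iff₀' (by positivity)]
        exact le_two_pi_mul_tiltedMass ht ht₁ hK hKπ hnear

end MassEstimates

noncomputable section Comparison

open Finset

lemma abs_sub_le_sub_of_succ {g H : ℕ → ℝ} (hgH : ∀ j, |g j - g (j + 1)| ≤ H j - H (j + 1))
    {i j : ℕ} (hij : i ≤ j) : |g i - g j| ≤ H i - H j := by
  induction j, hij using Nat.le_induction with
  | base => simp
  | succ j _ ih => linarith [abs_sub_le (g i) (g j) (g (j + 1)), hgH j]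

lemma abs_sum_sub_le_of_interlaced {g H : ℕ → ℝ}
    (hgH : ∀ j, |g j - g (j + 1)| ≤ H j - H (j + 1)) {p q : ℕ → ℕ} (hpq : ∀ n, p n ≤ q n)
    (hqp : ∀ n, q n ≤ p (n + 1)) (k : ℕ) :
    |∑ n ∈ range k, (g (p n) - g (q n))| ≤ H (p 0) - H (p k) := by
  induction k with
  | zero => simp
  | succ k ih =>
    rw [sum_range_succ]
    have hH := (abs_nonneg _).trans (abs_sub_le_sub_of_succ hgH (hqp k))
    linarith [abs_add_le (∑ n ∈ range k, (g (p n) - g (q n))) (g (p k) - g (q k)),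
      abs_sub_le_sub_of_succ hgH (hpq k)]

lemma abs_sub_zero_le_mul {a : ℕ → ℝ} {D : ℝ} (ha : ∀ j, |a j - a (j + 1)| ≤ D) (j : ℕ) :
    |a j - a 0| ≤ j * D := by
  have hlin := abs_sub_le_sub_of_succ (H := fun j => -(j * D)) (fun j => by
    push_cast
    linarith [ha j]) (Nat.zero_le j)
  rw [abs_sub_comm]
  simpa using hlin

lemma exp_neg_mul_one_add_le (y : ℝ) : exp (-y) * (1 + y) ≤ 2 * exp (-y / 2) := by
  have hle : 1 + y ≤ 2 * exp (y / 2) := by linarith [add_one_le_exp (y / 2)]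
  calc exp (-y) * (1 + y) ≤ exp (-y) * (2 * exp (y / 2)) := by gcongr
    _ = 2 * exp (-y / 2) := by
      rw [mul_left_comm, ← exp_add]
      ring_nf

lemma div_four_le_one_sub_exp_neg_half {t : ℝ} (ht : 0 ≤ t) (ht₁ : t ≤ 1) :
    t / 4 ≤ 1 - exp (-(t / 2)) := by
  have hinv : exp (-(t / 2)) ≤ (t / 2 + 1)⁻¹ := by
    rw [exp_neg]
    exact inv_anti₀ (by positivity) (add_one_le_exp _)
  have hquad : (t / 2 + 1)⁻¹ ≤ 1 - t / 4 := by
    rw [inv_le_iff_one_le_mul₀ (by positivity)]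
    nlinarith
  linarith

variable {t : ℝ}

lemma abs_exp_mul_sub_succ_le {a : ℕ → ℝ} {D : ℝ} (ht : 0 ≤ t)
    (ha : ∀ j, |a j - a (j + 1)| ≤ D) (j : ℕ) :
    |exp (-(j * t)) * (a j - a 0) - exp (-((j + 1 : ℕ) * t)) * (a (j + 1) - a 0)| ≤
      2 * D * exp (-(j * t) / 2) := by
  have hD : 0 ≤ D := (abs_nonneg _).trans (ha 0)
  have hexp₁ : exp (-t) ≤ 1 := exp_le_one_iff.2 (neg_nonpos.2 ht)
  have hexpt : 1 - exp (-t) ≤ t := by linarith [add_one_le_exp (-t)]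
  have hsplit : exp (-(j * t)) * (a j - a 0) - exp (-((j + 1 : ℕ) * t)) * (a (j + 1) - a 0) =
      exp (-(j * t)) * (exp (-t) * (a j - a (j + 1)) + (1 - exp (-t)) * (a j - a 0)) := by
    have hsucc : exp (-((j + 1 : ℕ) * t)) = exp (-(j * t)) * exp (-t) := by
      rw [← exp_add]
      push_cast
      ring_nf
    rw [hsucc]
    ring
  have hstep : |exp (-t) * (a j - a (j + 1)) + (1 - exp (-t)) * (a j - a 0)| ≤
      D * (1 + j * t) := by
    refine (abs_add_le _ _).trans ?_
    rw [abs_mul, abs_mul, abs_of_pos (exp_pos _), abs_of_nonneg (sub_nonneg.2 hexp₁)]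
    calc exp (-t) * |a j - a (j + 1)| + (1 - exp (-t)) * |a j - a 0| ≤ 1 * D + t * (j * D) := by
          gcongr
          · exact ha j
          · exact abs_sub_zero_le_mul ha j
      _ = D * (1 + j * t) := by ring
  rw [hsplit, abs_mul, abs_of_pos (exp_pos _)]
  calc exp (-(j * t)) * |exp (-t) * (a j - a (j + 1)) + (1 - exp (-t)) * (a j - a 0)|
      ≤ exp (-(j * t)) * (D * (1 + j * t)) := by gcongr
    _ = D * (exp (-(j * t)) * (1 + j * t)) := by ring
    _ ≤ D * (2 * exp (-(j * t) / 2)) := by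
        exact mul_le_mul_of_nonneg_left (exp_neg_mul_one_add_le _) hD
    _ = 2 * D * exp (-(j * t) / 2) := by ring

lemma exp_half_le_telescoping (ht : 0 < t) (ht₁ : t ≤ 1) (j : ℕ) :
    exp (-(j * t) / 2) ≤ 4 / t * (exp (-(j * t) / 2) - exp (-((j + 1 : ℕ) * t) / 2)) := by
  have hsucc : exp (-((j + 1 : ℕ) * t) / 2) = exp (-(j * t) / 2) * exp (-(t / 2)) := by
    rw [← exp_add]
    push_cast
    ring_nf
  calc exp (-(j * t) / 2) = 4 / t * (exp (-(j * t) / 2) * (t / 4)) := by field_simp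
    _ ≤ 4 / t * (exp (-(j * t) / 2) * (1 - exp (-(t / 2)))) := by
        gcongr
        exact div_four_le_one_sub_exp_neg_half ht.le ht₁
    _ = 4 / t * (exp (-(j * t) / 2) - exp (-((j + 1 : ℕ) * t) / 2)) := by
        rw [hsucc]
        ring

lemma abs_sum_exp_mul_sub_le (ht : 0 < t) (ht₁ : t ≤ 1) {a : ℕ → ℝ} {D : ℝ}
    (ha : ∀ j, |a j - a (j + 1)| ≤ D) {p q : ℕ → ℕ} (hpq : ∀ n, p n ≤ q n)
    (hqp : ∀ n, q n ≤ p (n + 1)) (k : ℕ) :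
    |∑ n ∈ range k,
      (exp (-(p n * t)) * (a (p n) - a 0) - exp (-(q n * t)) * (a (q n) - a 0))| ≤ 8 * D / t := by
  have hD : 0 ≤ D := (abs_nonneg _).trans (ha 0)
  have htelescope (j : ℕ) :
      |exp (-(j * t)) * (a j - a 0) - exp (-((j + 1 : ℕ) * t)) * (a (j + 1) - a 0)| ≤
        8 * D / t * exp (-(j * t) / 2) - 8 * D / t * exp (-((j + 1 : ℕ) * t) / 2) :=
    calc _ ≤ 2 * D * exp (-(j * t) / 2) := abs_exp_mul_sub_succ_le ht.le ha j
      _ ≤ 2 * D * (4 / t * (exp (-(j * t) / 2) - exp (-((j + 1 : ℕ) * t) / 2))) := by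
          gcongr
          exact exp_half_le_telescoping ht ht₁ j
      _ = _ := by ring
  refine (abs_sum_sub_le_of_interlaced htelescope hpq hqp k).trans ?_
  have hstart : exp (-(p 0 * t) / 2) ≤ 1 := exp_le_one_iff.2 (by
    have : 0 ≤ p 0 * t := by positivity
    linarith)
  have hend : 0 ≤ 8 * D / t * exp (-(p k * t) / 2) := by positivity
  linarith [mul_le_of_le_one_right (show 0 ≤ 8 * D / t by positivity) hstart]

lemma partitionCount_div_eq (ht : 0 < t) (N : ℤ) (j : ℕ) :
    (partitionCount (N - j) : ℝ) / partitionCount N =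
      exp (-(j * t)) * (tiltedMass t (N - j) / tiltedMass t N) := by
  have hshift : exp (-((N - j : ℤ) * t)) = exp (-(N * t)) * exp (j * t) := by
    rw [← exp_add]
    push_cast
    ring_nf
  rw [tiltedMass, tiltedMass, div_div_div_cancel_right₀ (partitionGenFun_exp_pos ht).ne', hshift,
    exp_neg (j * t)]
  field_simp

lemma Q1_le_Q2 (n ℓ : ℕ) : Q1 n ℓ ≤ Q2 n ℓ := by
  unfold Q2
  lia

lemma Q2_le_Q1_succ (n ℓ : ℕ) : Q2 n ℓ ≤ Q1 (n + 1) ℓ := by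
  unfold Q2 Q1
  nlinarith

lemma summable_exp_neg_mul (ht : 0 < t) {q : ℕ → ℕ} (hq : ∀ n, n ≤ q n) :
    Summable fun n => exp (-(q n * t)) := by
  refine (summable_geometric_of_lt_one (exp_nonneg (-t))
    (exp_lt_one_iff.2 (neg_lt_zero.2 ht))).of_nonneg_of_le (fun n => exp_nonneg _) fun n => ?_
  rw [← exp_nat_mul, mul_neg]
  gcongr
  exact hq n

lemma summable_exp_Q1_sub_exp_Q2 (ht : 0 < t) (ℓ : ℕ) :
    Summable fun n => exp (-(Q1 n ℓ * t)) - exp (-(Q2 n ℓ * t)) := by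
  have hQ1 (n : ℕ) : n ≤ Q1 n ℓ := by
    unfold Q1
    nlinarith
  exact (summable_exp_neg_mul ht hQ1).sub
    (summable_exp_neg_mul ht fun n => (hQ1 n).trans (Q1_le_Q2 n ℓ))

lemma abs_tiltedMass_ratio_sub_succ_le (ht : 0 < t) (ht₁ : t ≤ 1) {c : ℝ} (hc : 0 < c) {N : ℤ}
    (hN : c * massScale t ≤ tiltedMass t N) (j : ℕ) :
    |tiltedMass t (N - j) / tiltedMass t N - tiltedMass t (N - (j + 1 : ℕ)) / tiltedMass t N| ≤
      2 * (decayConst + 1) / c * massScale t := by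
  have hA := decayConst_pos
  have hs := massScale_pos ht
  have hmass : 0 < tiltedMass t N := (mul_pos hc hs).trans_le hN
  rw [← sub_div, abs_div, abs_of_pos hmass, div_le_iff₀ hmass]
  calc |tiltedMass t (N - j) - tiltedMass t (N - (j + 1 : ℕ))|
      ≤ 2 * (decayConst + 1) * t ^ 3 := by
        rw [Nat.cast_succ, ← sub_sub]
        exact abs_tiltedMass_sub_pred_le ht ht₁ _
    _ = 2 * (decayConst + 1) / c * massScale t * (c * massScale t) := by
        rw [← massScale_sq ht.le]
        field_simp
    _ ≤ 2 * (decayConst + 1) / c * massScale t * tiltedMass t N := by gcongr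

lemma abs_Vd_div_sub_sum_le (ht : 0 < t) (ht₁ : t ≤ 1) {c : ℝ} (hc : 0 < c) {N k : ℕ} (ℓ : ℕ)
    (hN : c * massScale t ≤ tiltedMass t N) (hk : N < k) :
    |(Vd ℓ (N + ℓ * (ℓ + 1) / 2) : ℝ) / (partitionCount N : ℝ) -
      ∑ n ∈ range k, (exp (-(Q1 n ℓ * t)) - exp (-(Q2 n ℓ * t)))| ≤
      16 * (decayConst + 1) / c * √t := by
  have hmass : tiltedMass t N ≠ 0 := ((mul_pos hc (massScale_pos ht)).trans_le hN).ne'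
  have hVd : (Vd ℓ (N + ℓ * (ℓ + 1) / 2) : ℝ) = ∑ n ∈ range k,
      ((partitionCount ((N : ℤ) - Q1 n ℓ) : ℝ) - partitionCount ((N : ℤ) - Q2 n ℓ)) := by
    exact_mod_cast congrArg (Int.cast : ℤ → ℝ) (Vd_eq_sum_partitionCount (ℓ := ℓ) hk)
  have hbound := abs_sum_exp_mul_sub_le ht ht₁ (abs_tiltedMass_ratio_sub_succ_le ht ht₁ hc hN)
    (Q1_le_Q2 · ℓ) (Q2_le_Q1_succ · ℓ) k
  convert! hbound using 1
  · rw [hVd, sum_div, ← sum_sub_distrib]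
    refine congrArg abs (sum_congr rfl fun n _ => ?_)
    rw [sub_div, partitionCount_div_eq ht, partitionCount_div_eq ht, Nat.cast_zero, sub_zero,
      div_self hmass]
    ring
  · rw [massScale]
    field_simp
    ring

theorem abs_Vd_div_sub_tsum_le (ht : 0 < t) (ht₁ : t ≤ 1) {c : ℝ} (hc : 0 < c) {N : ℕ} (ℓ : ℕ)
    (hN : c * massScale t ≤ tiltedMass t N) :
    |(Vd ℓ (N + ℓ * (ℓ + 1) / 2) : ℝ) / (partitionCount N : ℝ) -
      ∑' n, (exp (-(Q1 n ℓ * t)) - exp (-(Q2 n ℓ * t)))| ≤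
      16 * (decayConst + 1) / c * √t := by
  have hlim := (summable_exp_Q1_sub_exp_Q2 ht ℓ).hasSum.tendsto_sum_nat
  refine le_of_tendsto (hlim.const_sub _).abs ?_
  filter_upwards [Filter.eventually_gt_atTop N] with k hk
  exact abs_Vd_div_sub_sum_le ht ht₁ hc ℓ hN hk

end Comparison

noncomputable section SaddlePoint

open Filter Topology

/-- The tilt `B / (2 √N)`, at which the mean of the tilted law is `N` to leading order. -/
def saddlePoint (N : ℕ) : ℝ := 2 * π / √6 / (2 * √N)

lemma saddlePoint_pos {N : ℕ} (hN : 0 < N) : 0 < saddlePoint N := by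
  unfold saddlePoint
  positivity

lemma tendsto_saddlePoint : Tendsto saddlePoint atTop (𝓝[>] 0) :=
  tendsto_nhdsWithin_iff.2
    ⟨((tendsto_sqrt_atTop.comp tendsto_natCast_atTop_atTop).const_mul_atTop
      two_pos).const_div_atTop _, (eventually_gt_atTop 0).mono fun _ hN => saddlePoint_pos hN⟩

lemma natCast_eq_pi_sq_div_saddlePoint {N : ℕ} (hN : 0 < N) :
    (N : ℝ) = π ^ 2 / (6 * saddlePoint N ^ 2) := by
  rw [saddlePoint, div_pow, div_pow, mul_pow, mul_pow, sq_sqrt N.cast_nonneg,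
    sq_sqrt (Nat.ofNat_nonneg 6)]
  field_simp

lemma sqrt_saddlePoint_le {N : ℕ} : √(saddlePoint N) ≤ 2 * (N : ℝ) ^ (-(1 / 4) : ℝ) := by
  have hle : saddlePoint N ≤ 4 * (N : ℝ) ^ (-(1 / 2) : ℝ) := by
    have h6 : 2 ≤ √6 := le_sqrt_of_sq_le (by norm_num)
    have hπ : π / √6 ≤ 4 := (div_le_iff₀ (by positivity)).2 (by linarith [pi_lt_d2])
    calc saddlePoint N = π / √6 * (√N)⁻¹ := by
          rw [saddlePoint]
          ring
      _ ≤ 4 * (√N)⁻¹ := by gcongr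
      _ = 4 * (N : ℝ) ^ (-(1 / 2) : ℝ) := by rw [rpow_neg N.cast_nonneg, sqrt_eq_rpow]
  calc √(saddlePoint N) ≤ √(2 ^ 2 * (N : ℝ) ^ (-(1 / 2) : ℝ)) :=
        sqrt_le_sqrt (hle.trans_eq (by norm_num))
    _ = 2 * (N : ℝ) ^ (-(1 / 4) : ℝ) := by
        rw [sqrt_mul (by positivity), sqrt_sq zero_le_two, sqrt_eq_rpow,
          ← rpow_mul N.cast_nonneg]
        norm_num

end SaddlePoint

theorem stmt_10_general :
    ∃ C > (0 : ℝ), ∃ N₀ : ℕ, ∀ N : ℕ, N₀ ≤ N → ∀ ℓ : ℕ,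
      |(Vd ℓ (N + ℓ * (ℓ + 1) / 2) : ℝ) / (partitionCount (N : ℤ) : ℝ) -
          ∑' n : ℕ,
            (Real.exp (-(2 * π / Real.sqrt 6) * (Q1 n ℓ : ℝ) / (2 * Real.sqrt N)) -
              Real.exp (-(2 * π / Real.sqrt 6) * (Q2 n ℓ : ℝ) / (2 * Real.sqrt N)))| ≤
        C * (N : ℝ) ^ (-(1 / 4) : ℝ) := by
  obtain ⟨c, hc, hmass⟩ := exists_eventually_mul_massScale_le_tiltedMass
  have hsmall : ∀ᶠ t : ℝ in nhdsWithin 0 (Set.Ioi 0), t ≤ 1 :=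
    eventually_nhdsGT_zero_le continuousAt_id one_pos
  obtain ⟨N₀, hN₀⟩ := Filter.eventually_atTop.1 ((Filter.eventually_gt_atTop 0).and
    (tendsto_saddlePoint.eventually (hmass.and hsmall)))
  have hA := decayConst_pos
  refine ⟨16 * (decayConst + 1) / c * 2, by positivity, N₀, fun N hN ℓ => ?_⟩
  obtain ⟨hNpos, hmassN, hsmallN⟩ := hN₀ N hN
  have hexponent (q : ℝ) : -(2 * π / √6) * q / (2 * √N) = -(q * saddlePoint N) := by
    rw [saddlePoint]
    ring
  simp_rw [hexponent]
  calc _ ≤ 16 * (decayConst + 1) / c * √(saddlePoint N) :=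
        abs_Vd_div_sub_tsum_le (saddlePoint_pos hNpos) hsmallN hc ℓ
          (hmassN N (natCast_eq_pi_sq_div_saddlePoint hNpos))
    _ ≤ 16 * (decayConst + 1) / c * 2 * (N : ℝ) ^ (-(1 / 4) : ℝ) := by
        rw [mul_assoc _ (2 : ℝ)]
        gcongr
        exact sqrt_saddlePoint_le

theorem stmt_10 :
    ∃ C > (0 : ℝ), ∃ N₀ : ℕ, ∀ N : ℕ, N₀ ≤ N → ∀ ℓ : ℕ,
      (ℓ : ℝ) ≤ Real.sqrt N * (Real.log N) ^ 2 →
      |(Vd ℓ (N + ℓ * (ℓ + 1) / 2) : ℝ) / (partitionCount (N : ℤ) : ℝ) -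
          ∑' n : ℕ,
            (Real.exp (-(2 * π / Real.sqrt 6) * (Q1 n ℓ : ℝ) / (2 * Real.sqrt N)) -
              Real.exp (-(2 * π / Real.sqrt 6) * (Q2 n ℓ : ℝ) / (2 * Real.sqrt N)))| ≤
        C * (N : ℝ) ^ (-(1 / 5) : ℝ) := by
  obtain ⟨C, hC, N₀, hN₀⟩ := stmt_10_general
  refine ⟨C, hC, max N₀ 1, fun N hN ℓ _ => (hN₀ N (le_of_max_le_left hN) ℓ).trans ?_⟩
  have hN₁ : (1 : ℝ) ≤ N := Nat.one_le_cast.2 (le_of_max_le_right hN)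
  exact mul_le_mul_of_nonneg_left (rpow_le_rpow_of_exponent_le hN₁ (by norm_num)) hC.le
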